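/- arXiv:0809.2427 — 3 statements merged into one kernel-verified Lean document; each statement's English description precedes it below -/
import Mathlib

section
/- Let B₃₄ be the group presented by generators a_1,…,a_6 and relations: braids a_1a_2a_1 = a_2a_1a_2, a_2a_3a_2 = a_3a_2a_3, a_2a_4a_2 = a_4a_2a_4, a_3a_4a_3 = a_4a_3a_4, a_3a_5a_3 = a_5a_3a_5, a_4a_5a_4 = a_5a_4a_5, a_1a_5a_1 = a_5a_1a_5, a_6a_1a_6 = a_1a_6a_1, a_6a_2a_6 = a_2a_6a_2, a_6a_3a_6 = a_3a_6a_3; commutations a_1a_3 = a_3a_1, a_1a_4 = a_4a_1, a_2a_5 = a_5a_2, a_6a_4 = a_4a_6, a_6a_5 = a_5a_6; and the cycle relations rel_4(a_2,a_3,a_4), rel_4(a_3,a_4,a_5), rel_9(a_3,a_2,a_1,a_5), rel_4(a_2,a_1,a_6), rel_4(a_2,a_3,a_6), rel_9(a_1,a_5,a_3,a_6). Let B'₃₄ be the group presented by generators s,t,u,v,w,x and relations: braids sts = tst, tut = utu, uvu = vuv, twt = wtw, uwu = wuw, xvx = vxv; commutations su = us, sv = vs, sw = ws, tv = vt, vw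 = wv, xs = sx, xt = tx, xu = ux, xw = wx; and rel_6(t,u,w): tuwtuw = uwtuwt (the known presentation of the braid group of the unitary reflection group G₃₄). Then the assignment s ↦ a_1, t ↦ a_2, u ↦ a_3, v ↦ a_3a_4a_3⁻¹, w ↦ (a_2a_1)a_5(a_2a_1)⁻¹, x ↦ (a_4a_2a_1a_5a_3)a_6(a_4a_2a_1a_5a_3)⁻¹ extends to a group isomorphism from B'₃₄ onto B₃₄. -/
/- The new presentation B₃₄ (on the diagram D₃₄) and the known presentation
   B'₃₄ of the braid group of the unitary reflection group G₃₄ are equivalent: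
   s ↦ a₁, t ↦ a₂, u ↦ a₃, v ↦ a₃a₄a₃⁻¹, w ↦ (a₂a₁)a₅(a₂a₁)⁻¹,
   x ↦ (a₄a₂a₁a₅a₃)a₆(a₄a₂a₁a₅a₃)⁻¹ extends to an isomorphism B'₃₄ ≃ B₃₄.
   Generators a₁,…,a₆ are indexed by 0,…,5, and likewise s,t,u,v,w,x. -/

namespace G34Presentation

/-- `a i` is the free group generator corresponding to `a_{i+1}`. -/
def a (i : Fin 6) : FreeGroup (Fin 6) := FreeGroup.of i

/-- Relations of the presentation `B₃₄` on the diagram `D₃₄`. -/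
def rels34 : Set (FreeGroup (Fin 6)) :=
  { a 0 * a 1 * a 0 * (a 1 * a 0 * a 1)⁻¹,
    a 1 * a 2 * a 1 * (a 2 * a 1 * a 2)⁻¹,
    a 1 * a 3 * a 1 * (a 3 * a 1 * a 3)⁻¹,
    a 2 * a 3 * a 2 * (a 3 * a 2 * a 3)⁻¹,
    a 2 * a 4 * a 2 * (a 4 * a 2 * a 4)⁻¹,
    a 3 * a 4 * a 3 * (a 4 * a 3 * a 4)⁻¹,
    a 0 * a 4 * a 0 * (a 4 * a 0 * a 4)⁻¹,
    a 5 * a 0 * a 5 * (a 0 * a 5 * a 0)⁻¹,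
    a 5 * a 1 * a 5 * (a 1 * a 5 * a 1)⁻¹,
    a 5 * a 2 * a 5 * (a 2 * a 5 * a 2)⁻¹,
    a 0 * a 2 * (a 2 * a 0)⁻¹,
    a 0 * a 3 * (a 3 * a 0)⁻¹,
    a 1 * a 4 * (a 4 * a 1)⁻¹,
    a 5 * a 3 * (a 3 * a 5)⁻¹,
    a 5 * a 4 * (a 4 * a 5)⁻¹,
    a 1 * a 2 * a 3 * a 1 * (a 2 * a 3 * a 1 * a 2)⁻¹,
    a 2 * a 3 * a 4 * a 2 * (a 3 * a 4 * a 2 * a 3)⁻¹,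
    a 2 * a 1 * a 0 * a 4 * a 2 * a 1 * a 0 * a 4 * a 2 *
      (a 1 * a 0 * a 4 * a 2 * a 1 * a 0 * a 4 * a 2 * a 1)⁻¹,
    a 1 * a 0 * a 5 * a 1 * (a 0 * a 5 * a 1 * a 0)⁻¹,
    a 1 * a 2 * a 5 * a 1 * (a 2 * a 5 * a 1 * a 2)⁻¹,
    a 0 * a 4 * a 2 * a 5 * a 0 * a 4 * a 2 * a 5 * a 0 *
      (a 4 * a 2 * a 5 * a 0 * a 4 * a 2 * a 5 * a 0 * a 4)⁻¹ }

/-- `b 0,…,b 5` are the free group generators `s, t, u, v, w, x`. -/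
def b (i : Fin 6) : FreeGroup (Fin 6) := FreeGroup.of i

/-- Relations of the known presentation `B'₃₄` of `Braid(G₃₄)`. -/
def rels34' : Set (FreeGroup (Fin 6)) :=
  { b 0 * b 1 * b 0 * (b 1 * b 0 * b 1)⁻¹,
    b 1 * b 2 * b 1 * (b 2 * b 1 * b 2)⁻¹,
    b 2 * b 3 * b 2 * (b 3 * b 2 * b 3)⁻¹,
    b 1 * b 4 * b 1 * (b 4 * b 1 * b 4)⁻¹,
    b 2 * b 4 * b 2 * (b 4 * b 2 * b 4)⁻¹,
    b 5 * b 3 * b 5 * (b 3 * b 5 * b 3)⁻¹,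
    b 0 * b 2 * (b 2 * b 0)⁻¹,
    b 0 * b 3 * (b 3 * b 0)⁻¹,
    b 0 * b 4 * (b 4 * b 0)⁻¹,
    b 1 * b 3 * (b 3 * b 1)⁻¹,
    b 3 * b 4 * (b 4 * b 3)⁻¹,
    b 5 * b 0 * (b 0 * b 5)⁻¹,
    b 5 * b 1 * (b 1 * b 5)⁻¹,
    b 5 * b 2 * (b 2 * b 5)⁻¹,
    b 5 * b 4 * (b 4 * b 5)⁻¹,
    b 1 * b 2 * b 4 * b 1 * b 2 * b 4 * (b 2 * b 4 * b 1 * b 2 * b 4 * b 1)⁻¹ }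

/-- `A i` is the image of `a i` in `B₃₄`. -/
def A (i : Fin 6) : PresentedGroup rels34 := PresentedGroup.of i

/-!
Conjugation turns every relation into a braid or a commutation: if the generators of a triangle
braid, then `rel_4(x, y, z)` says that `x` commutes with `y z y⁻¹`; `rel_6` and `rel_9` similarly
say that a generator braids with a conjugate. The substitution `s ↦ a₁, …, x ↦ δ a₆ δ⁻¹`, where
`δ = a₄a₂a₁a₅a₃`, is an automorphism of the free group, so it suffices that, in any group, the `aᵢ`
satisfy the first set of relations iff their substitutes satisfy the second. For the first five
generators this is direct. For the last one, `s, t, u, v, w` are the conjugates by `δ` of words in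
`a₁, …, a₅`, which turns the relations of `x` with them into relations of `a₆` with these words.
-/

open MulAut (conj)

section Braids

/-- The braid relation `xyx = yxy` between two elements. -/
def Braids {M : Type*} [Mul M] (x y : M) : Prop := x * y * x = y * x * y

theorem Braids.symm {M : Type*} [Mul M] {x y : M} (h : Braids x y) : Braids y x := Eq.symm h

theorem braids_map_iff {F M N : Type*} [Mul M] [Mul N] [FunLike F M N] [MulHomClass F M N]
    {f : F} (hf : Function.Injective f) {x y : M} : Braids (f x) (f y) ↔ Braids x y := by
  simp only [Braids, ← map_mul, hf.eq_iff]

end Braids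

section Conj

variable {G : Type*} [Group G] {g x y z w : G}

theorem conj_mul_apply (g h x : G) : conj (g * h) x = conj g (conj h x) := by
  rw [map_mul, MulAut.mul_apply]

theorem conj_conj_inv (g x : G) : conj g (conj g⁻¹ x) = x := by
  rw [map_inv, MulAut.apply_inv_self]

theorem conj_inv_conj (g x : G) : conj g⁻¹ (conj g x) = x := by
  rw [map_inv, MulAut.inv_apply_self]

theorem map_conj {H : Type*} [Group H] (φ : G →* H) (g x : G) :
    φ (conj g x) = conj (φ g) (φ x) := by
  simp

theorem conj_eq_self (h : Commute g x) : conj g x = x := h.mul_inv_cancel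

theorem conj_conj_comm (h : Commute x y) (z : G) : conj x (conj y z) = conj y (conj x z) := by
  rw [← conj_mul_apply, h.eq, conj_mul_apply]

theorem commute_conj_conj_iff (g x y : G) : Commute (conj g x) (conj g y) ↔ Commute x y :=
  commute_map_iff (conj g).injective

theorem commute_conj_iff (g x y : G) : Commute x (conj g y) ↔ Commute (conj g⁻¹ x) y := by
  rw [← commute_conj_conj_iff g (conj g⁻¹ x) y, conj_conj_inv]

theorem commute_conj_iff_of_commute (h : Commute g x) :
    Commute x (conj g y) ↔ Commute x y := by
  rw [commute_conj_iff, conj_eq_self h.inv_left]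

theorem commute_conj_of_commute (hg : Commute x g) (hy : Commute x y) : Commute x (conj g y) :=
  (commute_conj_iff_of_commute hg.symm).2 hy

theorem braids_conj_conj_iff (g x y : G) : Braids (conj g x) (conj g y) ↔ Braids x y :=
  braids_map_iff (conj g).injective

theorem braids_conj_iff (g x y : G) : Braids x (conj g y) ↔ Braids (conj g⁻¹ x) y := by
  rw [← braids_conj_conj_iff g (conj g⁻¹ x) y, conj_conj_inv]

theorem braids_conj_iff_of_commute (h : Commute g x) : Braids x (conj g y) ↔ Braids x y := by
  rw [braids_conj_iff, conj_eq_self h.inv_left]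

theorem braids_conj_self_iff (x y : G) : Braids x (conj x y) ↔ Braids x y :=
  braids_conj_iff_of_commute (Commute.refl x)

namespace Braids

theorem conj_eq_conj_inv (h : Braids x y) : conj x y = conj y⁻¹ x := by
  rw [MulAut.conj_apply, MulAut.conj_apply, inv_inv, mul_inv_eq_iff_eq_mul]
  simpa only [Braids, mul_assoc, eq_inv_mul_iff_mul_eq] using h.symm

theorem conj_conj_eq (h : Braids x y) : conj x (conj y x) = y := by
  rw [h.symm.conj_eq_conj_inv, conj_conj_inv]

theorem conj_conj_left_eq (h : Braids x y) : conj (conj x y) x = y := by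
  rw [((braids_conj_self_iff x y).2 h).symm.conj_eq_conj_inv, conj_inv_conj]

theorem iff_of_commute_conj (h : Braids x y) (hz : Commute z (conj x y)) :
    Braids z x ↔ Braids z y := by
  rw [← braids_conj_iff_of_commute hz.symm, h.conj_conj_left_eq]

end Braids

theorem commute_conj_rotate (hyz : Braids y z) :
    Commute x (conj y z) ↔ Commute y (conj z x) := by
  rw [hyz.conj_eq_conj_inv, commute_conj_iff, inv_inv, Commute.symm_iff]

theorem braids_conj_conj_rotate (hxw : Braids x w) (hyw : Commute y w) (hzw : Braids z w)
    (h : Braids x (conj y (conj z w))) : Braids w (conj x (conj y z)) := by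
  rwa [hzw.conj_eq_conj_inv, conj_conj_comm hyw.inv_right, braids_conj_iff, inv_inv,
    hxw.symm.conj_eq_conj_inv, ← braids_conj_iff] at h

end Conj

section CycleRelations

variable {G : Type*} [Group G] {x y z w : G}

theorem rel4_iff_commute_conj (hxy : Braids x y) :
    x * y * z * x = y * z * x * y ↔ Commute x (conj y z) := by
  have left_eq : x * y * z * x = x * conj y z * (y * x) := by
    simp [mul_assoc]
  have right_eq : y * z * x * y = conj y z * x * (y * x) :=
    calc y * z * x * y = conj y z * (y * x * y) := by simp [mul_assoc]
      _ = conj y z * x * (y * x) := by rw [← hxy]; simp only [mul_assoc]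
  rw [left_eq, right_eq, mul_left_inj, Commute, SemiconjBy]

theorem rel4_iff_commute_conj_last (hxy : Braids x y) (hyz : Braids y z) (hzx : Braids z x) :
    x * y * z * x = y * z * x * y ↔ Commute z (conj x y) := by
  rw [rel4_iff_commute_conj hxy, commute_conj_rotate hyz, commute_conj_rotate hzx]

theorem rel6_iff_braids_conj_inv (hxy : Braids x y) (hxz : Braids x z) :
    x * y * z * x * y * z = y * z * x * y * z * x ↔ Braids y (conj x⁻¹ z) := by
  set c := conj x⁻¹ z with hc
  have zx_eq : z * x = x * c := by simp [hc, mul_assoc]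
  have xc_eq : x * c = c * z := by
    rw [← zx_eq, hc, ← hxz.symm.conj_eq_conj_inv]
    simp
  have left_eq : x * y * z * x * y * z = y * x * (y * c * y) * z :=
    calc x * y * z * x * y * z = x * y * (z * x) * y * z := by simp only [mul_assoc]
      _ = x * y * x * c * y * z := by rw [zx_eq]; simp only [mul_assoc]
      _ = y * x * (y * c * y) * z := by rw [hxy]; simp only [mul_assoc]
  have right_eq : y * z * x * y * z * x = y * x * (c * y * c) * z :=
    calc y * z * x * y * z * x = y * (z * x) * y * (z * x) := by simp only [mul_assoc]
      _ = y * (x * c) * y * (c * z) := by rw [zx_eq, xc_eq]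
      _ = y * x * (c * y * c) * z := by simp only [mul_assoc]
  rw [left_eq, right_eq, mul_left_inj, mul_right_inj, Braids]

theorem rel9_iff_rel6 (hxy : Braids x y) (hyz : Braids y z) (hxz : Commute x z)
    (hyw : Commute y w) :
    x * y * z * w * x * y * z * w * x = y * z * w * x * y * z * w * x * y ↔
      x * conj y (conj z w) * y * x * conj y (conj z w) * y =
        conj y (conj z w) * y * x * conj y (conj z w) * y * x := by
  set d := conj y (conj z w) with hd
  have yzw_eq : y * z * w = d * y * z := by simp [hd, mul_assoc]
  have zx_eq : z * x = x * z := hxz.symm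
  have zd_eq : z * d = d * z := by
    have h := (commute_conj_conj_iff (y * z) y w).2 hyw
    rw [conj_mul_apply, conj_mul_apply, hyz.conj_conj_eq] at h
    exact h
  have zyz_eq : z * y * z = y * z * y := hyz.symm
  have left_eq : x * y * z * w * x * y * z * w * x = x * d * y * x * d * y * (z * y * x) :=
    calc x * y * z * w * x * y * z * w * x
      _ = x * (y * z * w) * x * (y * z * w) * x := by simp only [mul_assoc]
      _ = x * d * y * (z * x) * d * y * z * x := by rw [yzw_eq]; simp only [mul_assoc]
      _ = x * d * y * x * (z * d) * y * z * x := by rw [zx_eq]; simp only [mul_assoc]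
      _ = x * d * y * x * d * (z * y * z) * x := by rw [zd_eq]; simp only [mul_assoc]
      _ = x * d * y * x * d * y * (z * y * x) := by rw [zyz_eq]; simp only [mul_assoc]
  have right_eq : y * z * w * x * y * z * w * x * y = d * y * x * d * y * x * (z * y * x) :=
    calc y * z * w * x * y * z * w * x * y
      _ = (y * z * w) * x * (y * z * w) * x * y := by simp only [mul_assoc]
      _ = d * y * (z * x) * d * y * z * x * y := by rw [yzw_eq]; simp only [mul_assoc]
      _ = d * y * x * (z * d) * y * z * x * y := by rw [zx_eq]; simp only [mul_assoc]
      _ = d * y * x * d * (z * y * z) * x * y := by rw [zd_eq]; simp only [mul_assoc]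
      _ = d * y * x * d * y * z * (y * x * y) := by rw [zyz_eq]; simp only [mul_assoc]
      _ = d * y * x * d * y * (z * x) * y * x := by rw [← hxy]; simp only [mul_assoc]
      _ = d * y * x * d * y * x * (z * y * x) := by rw [zx_eq]; simp only [mul_assoc]
  rw [left_eq, right_eq, mul_left_inj]

theorem rel6_conj_iff_braids_conj (hxy : Braids x y) (hxz : Braids x z) :
    x * conj y z * y * x * conj y z * y = conj y z * y * x * conj y z * y * x ↔
      Braids x (conj y z) := by
  set d := conj y z with hd
  have dy_eq : d * y = y * z := by simp [hd, mul_assoc]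
  have left_eq : x * d * y * x * d * y = x * d * x * (y * x * z) :=
    calc x * d * y * x * d * y = x * d * y * x * (d * y) := by simp only [mul_assoc]
      _ = x * d * (y * x * y) * z := by rw [dy_eq]; simp only [mul_assoc]
      _ = x * d * x * (y * x * z) := by rw [← hxy]; simp only [mul_assoc]
  have right_eq : d * y * x * d * y * x = d * x * d * (y * x * z) :=
    calc d * y * x * d * y * x = d * (y * x * (d * y) * x) := by simp only [mul_assoc]
      _ = d * (y * x * y) * z * x := by rw [dy_eq]; simp only [mul_assoc]
      _ = d * x * y * (x * z * x) := by rw [← hxy]; simp only [mul_assoc]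
      _ = d * x * (y * z) * x * z := by rw [hxz]; simp only [mul_assoc]
      _ = d * x * d * (y * x * z) := by rw [← dy_eq]; simp only [mul_assoc]
  rw [left_eq, right_eq, mul_left_inj, Braids]

theorem rel9_iff_braids_conj_conj (hxy : Braids x y) (hyz : Braids y z) (hxw : Braids x w)
    (hxz : Commute x z) (hyw : Commute y w) :
    x * y * z * w * x * y * z * w * x = y * z * w * x * y * z * w * x * y ↔
      Braids x (conj y (conj z w)) := by
  rw [rel9_iff_rel6 hxy hyz hxz hyw, rel6_conj_iff_braids_conj hxy]
  exact (braids_conj_iff_of_commute hxz.symm).2 hxw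

end CycleRelations

/-- The relations of `B₃₄` that only involve `a₁, …, a₅`, with the cycle relations in conjugated
form. In the name of a relation, the index block after the underscore stands for an iterated
conjugate: `215` is `conj a₂ (conj a₁ a₅)`. -/
structure B33Relations {G : Type*} [Group G] (a₁ a₂ a₃ a₄ a₅ : G) : Prop where
  braid₁₂ : Braids a₁ a₂
  braid₂₃ : Braids a₂ a₃
  braid₂₄ : Braids a₂ a₄
  braid₃₄ : Braids a₃ a₄
  braid₃₅ : Braids a₃ a₅
  braid₄₅ : Braids a₄ a₅
  braid₁₅ : Braids a₁ a₅
  comm₁₃ : Commute a₁ a₃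
  comm₁₄ : Commute a₁ a₄
  comm₂₅ : Commute a₂ a₅
  comm₂_₃₄ : Commute a₂ (conj a₃ a₄)
  comm₅_₃₄ : Commute a₅ (conj a₃ a₄)
  braid₃_₂₁₅ : Braids a₃ (conj a₂ (conj a₁ a₅))

/-- The relations of `B₃₄`, named as in `B33Relations`. -/
structure B34Relations {G : Type*} [Group G] (a₁ a₂ a₃ a₄ a₅ a₆ : G) : Prop
    extends B33Relations a₁ a₂ a₃ a₄ a₅ where
  braid₆₁ : Braids a₆ a₁
  braid₆₂ : Braids a₆ a₂
  braid₆₃ : Braids a₆ a₃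
  comm₆₄ : Commute a₆ a₄
  comm₆₅ : Commute a₆ a₅
  comm₆_₂₁ : Commute a₆ (conj a₂ a₁)
  comm₆_₂₃ : Commute a₆ (conj a₂ a₃)
  braid₁_₅₃₆ : Braids a₁ (conj a₅ (conj a₃ a₆))

/-- The relations of `B'₃₄` that only involve `s, t, u, v, w`, with `rel_6(t, u, w)` in
conjugated form. -/
structure B33Relations' {G : Type*} [Group G] (s t u v w : G) : Prop where
  braid_st : Braids s t
  braid_tu : Braids t u
  braid_uv : Braids u v
  braid_tw : Braids t w
  braid_uw : Braids u w
  comm_su : Commute s u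
  comm_sv : Commute s v
  comm_sw : Commute s w
  comm_tv : Commute t v
  comm_vw : Commute v w
  braid_u_tw : Braids u (conj t⁻¹ w)

/-- The relations of `B'₃₄`, with `rel_6(t, u, w)` in conjugated form. -/
structure B34Relations' {G : Type*} [Group G] (s t u v w x : G) : Prop
    extends B33Relations' s t u v w where
  braid_xv : Braids x v
  comm_xs : Commute x s
  comm_xt : Commute x t
  comm_xu : Commute x u
  comm_xw : Commute x w

section Relations

variable {G : Type*} [Group G] {a₁ a₂ a₃ a₄ a₅ a₆ : G}

namespace B33Relations

theorem comm₁_₃₄ (H : B33Relations a₁ a₂ a₃ a₄ a₅) : Commute a₁ (conj a₃ a₄) :=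
  commute_conj_of_commute H.comm₁₃ H.comm₁₄

theorem comm₃₄_₂₁₅ (H : B33Relations a₁ a₂ a₃ a₄ a₅) :
    Commute (conj a₃ a₄) (conj a₂ (conj a₁ a₅)) :=
  commute_conj_of_commute H.comm₂_₃₄.symm
    (commute_conj_of_commute H.comm₁_₃₄.symm H.comm₅_₃₄.symm)

theorem conj₄₂₁_eq_conj_inv (H : B33Relations a₁ a₂ a₃ a₄ a₅) :
    conj a₄ (conj a₂ a₁) = conj a₁⁻¹ (conj a₂⁻¹ a₄) := by
  rw [H.braid₁₂.symm.conj_eq_conj_inv, conj_conj_comm H.comm₁₄.symm.inv_right,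
    H.braid₂₄.symm.conj_eq_conj_inv]

theorem comm₃_₄₂₁ (H : B33Relations a₁ a₂ a₃ a₄ a₅) : Commute a₃ (conj a₄ (conj a₂ a₁)) := by
  rw [H.conj₄₂₁_eq_conj_inv, ← H.braid₂₄.symm.conj_eq_conj_inv]
  exact commute_conj_of_commute H.comm₁₃.symm.inv_right
    ((commute_conj_rotate H.braid₃₄).1 H.comm₂_₃₄)

theorem braid₅_₄₂₁ (H : B33Relations a₁ a₂ a₃ a₄ a₅) : Braids a₅ (conj a₄ (conj a₂ a₁)) := by
  have braid₂₁₅_₄ : Braids (conj a₂ (conj a₁ a₅)) a₄ := by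
    rw [← H.braid₃₄.conj_conj_left_eq, braids_conj_iff_of_commute H.comm₃₄_₂₁₅]
    exact H.braid₃_₂₁₅.symm
  rwa [H.conj₄₂₁_eq_conj_inv, braids_conj_iff, braids_conj_iff, inv_inv, inv_inv]

end B33Relations

theorem B33Relations.toB33Relations' (H : B33Relations a₁ a₂ a₃ a₄ a₅) :
    B33Relations' a₁ a₂ a₃ (conj a₃ a₄) (conj a₂ (conj a₁ a₅)) where
  braid_st := H.braid₁₂
  braid_tu := H.braid₂₃
  braid_uv := (braids_conj_self_iff _ _).2 H.braid₃₄
  braid_tw := by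
    rw [braids_conj_self_iff, H.braid₁₅.conj_eq_conj_inv,
      braids_conj_iff_of_commute H.comm₂₅.symm.inv_left]
    exact H.braid₁₂.symm
  braid_uw := H.braid₃_₂₁₅
  comm_su := H.comm₁₃
  comm_sv := H.comm₁_₃₄
  comm_sw := by
    simpa only [conj_mul_apply, H.braid₁₂.symm.conj_conj_eq] using
      (commute_conj_conj_iff (a₂ * a₁) a₂ a₅).2 H.comm₂₅
  comm_tv := H.comm₂_₃₄
  comm_vw := H.comm₃₄_₂₁₅
  braid_u_tw := by
    rw [conj_inv_conj, braids_conj_iff_of_commute H.comm₁₃]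
    exact H.braid₃₅

theorem B33Relations'.toB33Relations
    (H : B33Relations' a₁ a₂ a₃ (conj a₃ a₄) (conj a₂ (conj a₁ a₅))) :
    B33Relations a₁ a₂ a₃ a₄ a₅ := by
  have braid₃₄ : Braids a₃ a₄ := (braids_conj_self_iff _ _).1 H.braid_uv
  have comm₂₅ : Commute a₂ a₅ := by
    rw [← commute_conj_conj_iff (a₂ * a₁), conj_mul_apply, conj_mul_apply,
      H.braid_st.symm.conj_conj_eq]
    exact H.comm_sw
  have braid₃₅ : Braids a₃ a₅ := by
    simpa only [conj_inv_conj, braids_conj_iff_of_commute H.comm_su] using H.braid_u_tw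
  have braid₁₅ : Braids a₁ a₅ := by
    have braid₂_₁₅ : Braids a₂ (conj a₁ a₅) := (braids_conj_self_iff _ _).1 H.braid_tw
    rwa [braids_conj_iff, ← H.braid_st.symm.conj_eq_conj_inv, ← braids_conj_conj_iff a₂⁻¹,
      conj_inv_conj, conj_eq_self comm₂₅.inv_left] at braid₂_₁₅
  have comm₅_₃₄ : Commute a₅ (conj a₃ a₄) := by
    have h := H.comm_vw
    rw [commute_conj_iff_of_commute H.comm_tv, commute_conj_iff_of_commute H.comm_sv] at h
    exact h.symm
  exact {
    braid₁₂ := H.braid_st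
    braid₂₃ := H.braid_tu
    braid₂₄ := (braid₃₄.iff_of_commute_conj H.comm_tv).1 H.braid_tu
    braid₃₄ := braid₃₄
    braid₃₅ := braid₃₅
    braid₄₅ := ((braid₃₄.iff_of_commute_conj comm₅_₃₄).1 braid₃₅.symm).symm
    braid₁₅ := braid₁₅
    comm₁₃ := H.comm_su
    comm₁₄ := (commute_conj_iff_of_commute H.comm_su.symm).1 H.comm_sv
    comm₂₅ := comm₂₅
    comm₂_₃₄ := H.comm_tv
    comm₅_₃₄ := comm₅_₃₄
    braid₃_₂₁₅ := H.braid_uw }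

namespace B33Relations

theorem conj_delta₂₃ (H : B33Relations a₁ a₂ a₃ a₄ a₅) :
    conj (a₄ * a₂ * a₁ * a₅ * a₃) (conj a₂ a₃) = a₁ := by
  simp only [conj_mul_apply]
  rw [H.braid₂₃.symm.conj_conj_eq, conj_eq_self H.comm₂₅.symm, H.braid₁₂.symm.conj_conj_eq,
    conj_eq_self H.comm₁₄.symm]

theorem conj_delta₄₅ (H : B33Relations a₁ a₂ a₃ a₄ a₅) :
    conj (a₄ * a₂ * a₁ * a₅ * a₃) (conj a₄ a₅) = a₂ := by
  have comm₃_₄₅ : Commute a₃ (conj a₄ a₅) := (commute_conj_rotate H.braid₃₄).1 H.comm₅_₃₄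
  simp only [conj_mul_apply]
  rw [conj_eq_self comm₃_₄₅, H.braid₄₅.symm.conj_conj_eq, conj_eq_self H.comm₁₄,
    H.braid₂₄.symm.conj_conj_eq]

theorem conj_delta₄ (H : B33Relations a₁ a₂ a₃ a₄ a₅) :
    conj (a₄ * a₂ * a₁ * a₅ * a₃) a₄ = a₃ := by
  simp only [conj_mul_apply]
  rw [conj_eq_self H.comm₅_₃₄, conj_eq_self H.comm₁_₃₄, conj_eq_self H.comm₂_₃₄,
    H.braid₃₄.symm.conj_conj_eq]

theorem conj_delta₄₂₁ (H : B33Relations a₁ a₂ a₃ a₄ a₅) :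
    conj (a₄ * a₂ * a₁ * a₅ * a₃) (conj a₄ (conj a₂ a₁)) = conj a₂ (conj a₁ a₅) := by
  rw [conj_mul_apply, conj_eq_self H.comm₃_₄₂₁, conj_mul_apply, H.braid₅_₄₂₁.conj_eq_conj_inv,
    H.conj₄₂₁_eq_conj_inv]
  simp [mul_assoc]

-- The conjugating elements on the left all commute with `a₆` in `B₃₄`, so `a₆` braids with this
-- word iff it braids with `a₃`.
theorem conj_delta₄_₄₂₁_₅₃ (H : B33Relations a₁ a₂ a₃ a₄ a₅) :
    conj (a₄ * a₂ * a₁ * a₅ * a₃) (conj a₄ (conj (conj a₄ (conj a₂ a₁)) (conj a₅ a₃))) =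
      conj a₃ a₄ := by
  have comm₂₁₅_₃₄ : Commute (a₂ * a₁ * a₅) (conj a₃ a₄) :=
    (H.comm₂_₃₄.mul_left H.comm₁_₃₄).mul_left H.comm₅_₃₄
  have delta_mul_eq : a₄ * a₂ * a₁ * a₅ * a₃ * a₄ * a₃⁻¹ * a₅⁻¹ =
      a₄ * conj a₃ a₄ * (a₂ * a₁) :=
    calc a₄ * a₂ * a₁ * a₅ * a₃ * a₄ * a₃⁻¹ * a₅⁻¹
      _ = a₄ * ((a₂ * a₁ * a₅) * conj a₃ a₄) * a₅⁻¹ := by simp [mul_assoc]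
      _ = a₄ * conj a₃ a₄ * (a₂ * a₁) := by rw [comm₂₁₅_₃₄.eq]; simp [mul_assoc]
  have braid₃₄_₄ : Braids (conj a₃ a₄) a₄ := by
    rw [H.braid₃₄.conj_eq_conj_inv]
    exact ((braids_conj_iff_of_commute (Commute.refl a₄).inv_left).2 H.braid₃₄.symm).symm
  rw [H.braid₃₅.symm.conj_eq_conj_inv, conj_conj_comm H.comm₃_₄₂₁.symm.inv_right,
    H.braid₅_₄₂₁.symm.conj_eq_conj_inv, ← conj_mul_apply, ← conj_mul_apply, ← conj_mul_apply,
    delta_mul_eq, H.conj₄₂₁_eq_conj_inv, conj_mul_apply, conj_mul_apply, conj_mul_apply a₂ a₁,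
    conj_conj_inv, conj_conj_inv, braid₃₄_₄.symm.conj_conj_eq]

end B33Relations

theorem B33Relations.braid₁_₅₃₆ (H : B33Relations a₁ a₂ a₃ a₄ a₅) (braid₆₁ : Braids a₆ a₁)
    (braid₆₂ : Braids a₆ a₂) (braid₆₃ : Braids a₆ a₃) (comm₆₅ : Commute a₆ a₅)
    (comm₆_₂₁ : Commute a₆ (conj a₂ a₁)) (comm₆_₂₃ : Commute a₆ (conj a₂ a₃)) :
    Braids a₁ (conj a₅ (conj a₃ a₆)) := by
  have braid₂_₁₅₃ : Braids a₂ (conj a₁ (conj a₅ a₃)) := by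
    have braid₅_₃₂₁ := braids_conj_conj_rotate H.braid₃₅ H.comm₂₅ H.braid₁₅ H.braid₃_₂₁₅
    have braid₁_₅₃₂ :=
      braids_conj_conj_rotate H.braid₁₅.symm H.comm₁₃.symm H.braid₁₂.symm braid₅_₃₂₁
    exact braids_conj_conj_rotate H.braid₁₂ H.comm₂₅.symm H.braid₂₃.symm braid₁_₅₃₂
  have braid₆_₁₅₃ : Braids a₆ (conj a₁ (conj a₅ a₃)) := by
    -- Conjugation by `c⁻¹` takes `a₂` to `a₆` and fixes `a₁`, `a₃` and `a₅`.
    set c := conj a₂⁻¹ a₆ with hc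
    have comm_c₁ : Commute c a₁ := (commute_conj_iff _ _ _).1 comm₆_₂₁
    have comm_c₃ : Commute c a₃ := (commute_conj_iff _ _ _).1 comm₆_₂₃
    have comm_c₅ : Commute c a₅ :=
      (commute_conj_of_commute H.comm₂₅.symm.inv_right comm₆₅.symm).symm
    have comm_c_₁₅₃ : Commute c (conj a₁ (conj a₅ a₃)) :=
      commute_conj_of_commute comm_c₁ (commute_conj_of_commute comm_c₅ comm_c₃)
    have conj_c_inv : conj c⁻¹ a₂ = a₆ := by
      have braid₂_c : Braids a₂ c :=
        (braids_conj_iff_of_commute (Commute.refl a₂).inv_left).2 braid₆₂.symm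
      rw [← braid₂_c.conj_eq_conj_inv, hc, conj_conj_inv]
    rw [← conj_c_inv]
    exact ((braids_conj_iff_of_commute comm_c_₁₅₃.inv_left).2 braid₂_₁₅₃.symm).symm
  have braid₃_₆₁₅ := braids_conj_conj_rotate braid₆₃ H.comm₁₃ H.braid₃₅.symm braid₆_₁₅₃
  have braid₅_₃₆₁ := braids_conj_conj_rotate H.braid₃₅ comm₆₅ H.braid₁₅ braid₃_₆₁₅
  exact braids_conj_conj_rotate H.braid₁₅.symm H.comm₁₃.symm braid₆₁ braid₅_₃₆₁

theorem B33Relations.toB34Relations (H : B33Relations a₁ a₂ a₃ a₄ a₅)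
    (braid₆₃ : Braids a₆ a₃) (comm₆₄ : Commute a₆ a₄) (comm₆₅ : Commute a₆ a₅)
    (comm₆_₂₁ : Commute a₆ (conj a₂ a₁)) (comm₆_₂₃ : Commute a₆ (conj a₂ a₃)) :
    B34Relations a₁ a₂ a₃ a₄ a₅ a₆ := by
  have braid₆₂ : Braids a₆ a₂ := (H.braid₂₃.iff_of_commute_conj comm₆_₂₃).2 braid₆₃
  have braid₆₁ : Braids a₆ a₁ := (H.braid₁₂.symm.iff_of_commute_conj comm₆_₂₁).1 braid₆₂
  exact { H with
    braid₆₁ := braid₆₁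
    braid₆₂ := braid₆₂
    braid₆₃ := braid₆₃
    comm₆₄ := comm₆₄
    comm₆₅ := comm₆₅
    comm₆_₂₁ := comm₆_₂₁
    comm₆_₂₃ := comm₆_₂₃
    braid₁_₅₃₆ := H.braid₁_₅₃₆ braid₆₁ braid₆₂ braid₆₃ comm₆₅ comm₆_₂₁ comm₆_₂₃ }

theorem B34Relations.toB34Relations' (H : B34Relations a₁ a₂ a₃ a₄ a₅ a₆) :
    B34Relations' a₁ a₂ a₃ (conj a₃ a₄) (conj a₂ (conj a₁ a₅))
      (conj (a₄ * a₂ * a₁ * a₅ * a₃) a₆) := by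
  have comm₆_₄₂₁ : Commute a₆ (conj a₄ (conj a₂ a₁)) :=
    commute_conj_of_commute H.comm₆₄ H.comm₆_₂₁
  have comm₆_₄₅ : Commute a₆ (conj a₄ a₅) := commute_conj_of_commute H.comm₆₄ H.comm₆₅
  refine { H.toB33Relations.toB33Relations' with
    braid_xv := ?_, comm_xs := ?_, comm_xt := ?_, comm_xu := ?_, comm_xw := ?_ }
  · rw [← H.conj_delta₄_₄₂₁_₅₃, braids_conj_conj_iff, braids_conj_iff_of_commute H.comm₆₄.symm,
      braids_conj_iff_of_commute comm₆_₄₂₁.symm, braids_conj_iff_of_commute H.comm₆₅.symm]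
    exact H.braid₆₃
  · simpa only [H.conj_delta₂₃] using H.comm₆_₂₃.map (conj (a₄ * a₂ * a₁ * a₅ * a₃))
  · simpa only [H.conj_delta₄₅] using comm₆_₄₅.map (conj (a₄ * a₂ * a₁ * a₅ * a₃))
  · simpa only [H.conj_delta₄] using H.comm₆₄.map (conj (a₄ * a₂ * a₁ * a₅ * a₃))
  · simpa only [H.conj_delta₄₂₁] using comm₆_₄₂₁.map (conj (a₄ * a₂ * a₁ * a₅ * a₃))

theorem B34Relations'.toB34Relations
    (H : B34Relations' a₁ a₂ a₃ (conj a₃ a₄) (conj a₂ (conj a₁ a₅))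
      (conj (a₄ * a₂ * a₁ * a₅ * a₃) a₆)) :
    B34Relations a₁ a₂ a₃ a₄ a₅ a₆ := by
  have H₅ : B33Relations a₁ a₂ a₃ a₄ a₅ := H.toB33Relations'.toB33Relations
  have comm₆₄ : Commute a₆ a₄ := by
    rw [← commute_conj_conj_iff (a₄ * a₂ * a₁ * a₅ * a₃), H₅.conj_delta₄]
    exact H.comm_xu
  have comm₆₅ : Commute a₆ a₅ := by
    rw [← commute_conj_iff_of_commute comm₆₄.symm,
      ← commute_conj_conj_iff (a₄ * a₂ * a₁ * a₅ * a₃), H₅.conj_delta₄₅]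
    exact H.comm_xt
  have comm₆_₄₂₁ : Commute a₆ (conj a₄ (conj a₂ a₁)) := by
    rw [← commute_conj_conj_iff (a₄ * a₂ * a₁ * a₅ * a₃), H₅.conj_delta₄₂₁]
    exact H.comm_xw
  have comm₆_₂₁ : Commute a₆ (conj a₂ a₁) :=
    (commute_conj_iff_of_commute comm₆₄.symm).1 comm₆_₄₂₁
  have comm₆_₂₃ : Commute a₆ (conj a₂ a₃) := by
    rw [← commute_conj_conj_iff (a₄ * a₂ * a₁ * a₅ * a₃), H₅.conj_delta₂₃]
    exact H.comm_xs
  have braid₆₃ : Braids a₆ a₃ := by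
    rw [← braids_conj_iff_of_commute comm₆₅.symm, ← braids_conj_iff_of_commute comm₆_₄₂₁.symm,
      ← braids_conj_iff_of_commute comm₆₄.symm,
      ← braids_conj_conj_iff (a₄ * a₂ * a₁ * a₅ * a₃), H₅.conj_delta₄_₄₂₁_₅₃]
    exact H.braid_xv
  exact H₅.toB34Relations braid₆₃ comm₆₄ comm₆₅ comm₆_₂₁ comm₆_₂₃

theorem b34Relations_iff :
    B34Relations a₁ a₂ a₃ a₄ a₅ a₆ ↔
      B34Relations' a₁ a₂ a₃ (conj a₃ a₄) (conj a₂ (conj a₁ a₅))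
        (conj (a₄ * a₂ * a₁ * a₅ * a₃) a₆) :=
  ⟨B34Relations.toB34Relations', B34Relations'.toB34Relations⟩

end Relations

section PresentedGroups

universe u

theorem forall_rels34_iff {G : Type*} [Group G] (φ : FreeGroup (Fin 6) →* G) :
    (∀ r ∈ rels34, φ r = 1) ↔
      B34Relations (φ (a 0)) (φ (a 1)) (φ (a 2)) (φ (a 3)) (φ (a 4)) (φ (a 5)) := by
  simp only [rels34, Set.mem_insert_iff, Set.mem_singleton_iff, forall_eq_or_imp, forall_eq,
    map_mul, map_inv, mul_inv_eq_one]
  constructor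
  · rintro ⟨braid₁₂, braid₂₃, braid₂₄, braid₃₄, braid₃₅, braid₄₅, braid₁₅, braid₆₁, braid₆₂,
      braid₆₃, comm₁₃, comm₁₄, comm₂₅, comm₆₄, comm₆₅, rel₂₃₄, rel₃₄₅, rel₃₂₁₅, rel₂₁₆, rel₂₃₆,
      rel₁₅₃₆⟩
    exact {
      braid₁₂, braid₂₃, braid₂₄, braid₃₄, braid₃₅, braid₄₅, braid₁₅, braid₆₁, braid₆₂, braid₆₃,
      comm₁₃, comm₁₄, comm₂₅, comm₆₄, comm₆₅
      comm₂_₃₄ := (rel4_iff_commute_conj braid₂₃).1 rel₂₃₄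
      comm₅_₃₄ := (rel4_iff_commute_conj_last braid₃₄ braid₄₅ (.symm braid₃₅)).1 rel₃₄₅
      braid₃_₂₁₅ := (rel9_iff_braids_conj_conj (.symm braid₂₃) (.symm braid₁₂) braid₃₅
        (.symm comm₁₃) comm₂₅).1 rel₃₂₁₅
      comm₆_₂₁ := (rel4_iff_commute_conj_last (.symm braid₁₂) (.symm braid₆₁) braid₆₂).1 rel₂₁₆
      comm₆_₂₃ := (rel4_iff_commute_conj_last braid₂₃ (.symm braid₆₃) braid₆₂).1 rel₂₃₆
      braid₁_₅₃₆ := (rel9_iff_braids_conj_conj braid₁₅ (.symm braid₃₅) (.symm braid₆₁)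
        comm₁₃ (.symm comm₆₅)).1 rel₁₅₃₆ }
  · intro H
    exact ⟨H.braid₁₂, H.braid₂₃, H.braid₂₄, H.braid₃₄, H.braid₃₅, H.braid₄₅, H.braid₁₅,
      H.braid₆₁, H.braid₆₂, H.braid₆₃, H.comm₁₃, H.comm₁₄, H.comm₂₅, H.comm₆₄, H.comm₆₅,
      (rel4_iff_commute_conj H.braid₂₃).2 H.comm₂_₃₄,
      (rel4_iff_commute_conj_last H.braid₃₄ H.braid₄₅ H.braid₃₅.symm).2 H.comm₅_₃₄,
      (rel9_iff_braids_conj_conj H.braid₂₃.symm H.braid₁₂.symm H.braid₃₅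
        H.comm₁₃.symm H.comm₂₅).2 H.braid₃_₂₁₅,
      (rel4_iff_commute_conj_last H.braid₁₂.symm H.braid₆₁.symm H.braid₆₂).2 H.comm₆_₂₁,
      (rel4_iff_commute_conj_last H.braid₂₃ H.braid₆₃.symm H.braid₆₂).2 H.comm₆_₂₃,
      (rel9_iff_braids_conj_conj H.braid₁₅ H.braid₃₅.symm H.braid₆₁.symm
        H.comm₁₃ H.comm₆₅.symm).2 H.braid₁_₅₃₆⟩

theorem forall_rels34'_iff {G : Type*} [Group G] (φ : FreeGroup (Fin 6) →* G) :
    (∀ r ∈ rels34', φ r = 1) ↔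
      B34Relations' (φ (b 0)) (φ (b 1)) (φ (b 2)) (φ (b 3)) (φ (b 4)) (φ (b 5)) := by
  simp only [rels34', Set.mem_insert_iff, Set.mem_singleton_iff, forall_eq_or_imp, forall_eq,
    map_mul, map_inv, mul_inv_eq_one]
  constructor
  · rintro ⟨braid_st, braid_tu, braid_uv, braid_tw, braid_uw, braid_xv, comm_su, comm_sv, comm_sw,
      comm_tv, comm_vw, comm_xs, comm_xt, comm_xu, comm_xw, rel_tuw⟩
    exact {
      braid_st, braid_tu, braid_uv, braid_tw, braid_uw, braid_xv, comm_su, comm_sv, comm_sw,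
      comm_tv, comm_vw, comm_xs, comm_xt, comm_xu, comm_xw
      braid_u_tw := (rel6_iff_braids_conj_inv braid_tu braid_tw).1 rel_tuw }
  · intro H
    exact ⟨H.braid_st, H.braid_tu, H.braid_uv, H.braid_tw, H.braid_uw, H.braid_xv, H.comm_su,
      H.comm_sv, H.comm_sw, H.comm_tv, H.comm_vw, H.comm_xs, H.comm_xt, H.comm_xu, H.comm_xw,
      (rel6_iff_braids_conj_inv H.braid_tu H.braid_tw).2 H.braid_u_tw⟩

/-- The words in the `aᵢ` substituted for `s, t, u, v, w, x`. -/
def substWord : Fin 6 → FreeGroup (Fin 6) :=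
  ![a 0, a 1, a 2, conj (a 2) (a 3), conj (a 1) (conj (a 0) (a 4)),
    conj (a 3 * a 1 * a 0 * a 4 * a 2) (a 5)]

/-- The words in `s, t, u, v, w, x` that recover the `aᵢ` from their substitutes `substWord`. -/
def substWordInv : Fin 6 → FreeGroup (Fin 6) :=
  let p := conj (b 2)⁻¹ (b 3)
  let r := conj (b 0)⁻¹ (conj (b 1)⁻¹ (b 4))
  ![b 0, b 1, b 2, p, r, conj (p * b 1 * b 0 * r * b 2)⁻¹ (b 5)]

theorem lift_substWord_substWordInv (i : Fin 6) :
    FreeGroup.lift substWord (substWordInv i) = a i := by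
  have lift_b (j : Fin 6) : FreeGroup.lift substWord (b j) = substWord j :=
    FreeGroup.lift_apply_of
  have lift_a₄ : FreeGroup.lift substWord (conj (b 2)⁻¹ (b 3)) = a 3 := by
    simp only [map_conj, map_inv (FreeGroup.lift substWord), lift_b]
    exact conj_inv_conj _ _
  have lift_a₅ : FreeGroup.lift substWord (conj (b 0)⁻¹ (conj (b 1)⁻¹ (b 4))) = a 4 := by
    simp only [map_conj, map_inv (FreeGroup.lift substWord), lift_b]
    exact (congrArg _ (conj_inv_conj _ _)).trans (conj_inv_conj _ _)
  fin_cases i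
  · exact lift_b 0
  · exact lift_b 1
  · exact lift_b 2
  · exact lift_a₄
  · exact lift_a₅
  · refine (map_conj _ _ _).trans ?_
    simp only [map_inv (FreeGroup.lift substWord), map_mul (FreeGroup.lift substWord), lift_b,
      lift_a₄, lift_a₅]
    exact conj_inv_conj _ _

theorem lift_substWordInv_substWord (i : Fin 6) :
    FreeGroup.lift substWordInv (substWord i) = b i := by
  have lift_a (j : Fin 6) : FreeGroup.lift substWordInv (a j) = substWordInv j :=
    FreeGroup.lift_apply_of
  fin_cases i
  · exact lift_a 0
  · exact lift_a 1
  · exact lift_a 2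
  · refine (map_conj _ _ _).trans ?_
    rw [lift_a, lift_a]
    exact conj_conj_inv _ _
  · refine (map_conj _ _ _).trans ?_
    rw [map_conj, lift_a, lift_a, lift_a]
    exact (congrArg _ (conj_conj_inv _ _)).trans (conj_conj_inv _ _)
  · refine (map_conj _ _ _).trans ?_
    simp only [map_mul (FreeGroup.lift substWordInv), lift_a]
    exact conj_conj_inv _ _

/-- The substitution of `substWord` for `s, t, u, v, w, x`, as an isomorphism from the free group
on `s, …, x` to the free group on `a₁, …, a₆`. -/
def substEquiv : FreeGroup (Fin 6) ≃* FreeGroup (Fin 6) :=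
  MonoidHom.toMulEquiv (FreeGroup.lift substWord) (FreeGroup.lift substWordInv)
    (FreeGroup.ext_hom _ _ fun i ↦ by
      rw [MonoidHom.comp_apply, FreeGroup.lift_apply_of, lift_substWordInv_substWord]; rfl)
    (FreeGroup.ext_hom _ _ fun i ↦ by
      rw [MonoidHom.comp_apply, FreeGroup.lift_apply_of, lift_substWord_substWordInv]; rfl)

theorem substEquiv_b (i : Fin 6) : substEquiv (b i) = substWord i := FreeGroup.lift_apply_of

theorem forall_rels34'_substEquiv_iff {G : Type*} [Group G] (φ : FreeGroup (Fin 6) →* G) :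
    (∀ r ∈ rels34', φ (substEquiv r) = 1) ↔ ∀ r ∈ rels34, φ r = 1 := by
  rw [forall_rels34_iff, b34Relations_iff]
  refine (forall_rels34'_iff (φ.comp substEquiv.toMonoidHom)).trans ?_
  simp [substEquiv_b, substWord]

theorem normalClosure_le_of_forall_hom {F : Type u} [Group F] {S T : Set F}
    (h : ∀ {G : Type u} [Group G] (φ : F →* G), (∀ r ∈ T, φ r = 1) → ∀ r ∈ S, φ r = 1) :
    Subgroup.normalClosure S ≤ Subgroup.normalClosure T :=
  Subgroup.normalClosure_le_normal fun r hr ↦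
    (QuotientGroup.eq_one_iff r).1 <| h (QuotientGroup.mk' (Subgroup.normalClosure T))
      (fun t ht ↦ (QuotientGroup.eq_one_iff t).2 (Subgroup.subset_normalClosure ht)) r hr

theorem map_normalClosure_rels34' :
    (Subgroup.normalClosure rels34').map substEquiv.toMonoidHom =
      Subgroup.normalClosure rels34 := by
  rw [Subgroup.map_normalClosure _ substEquiv.toMonoidHom substEquiv.surjective]
  refine le_antisymm (normalClosure_le_of_forall_hom fun φ hφ ↦ ?_)
    (normalClosure_le_of_forall_hom fun φ hφ ↦ ?_)
  · exact Set.forall_mem_image.2 ((forall_rels34'_substEquiv_iff φ).2 hφ)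
  · exact (forall_rels34'_substEquiv_iff φ).1 (Set.forall_mem_image.1 hφ)

end PresentedGroups

theorem B34_iso :
    ∃ e : PresentedGroup rels34' ≃* PresentedGroup rels34,
      e (PresentedGroup.of 0) = A 0 ∧
      e (PresentedGroup.of 1) = A 1 ∧
      e (PresentedGroup.of 2) = A 2 ∧
      e (PresentedGroup.of 3) = A 2 * A 3 * (A 2)⁻¹ ∧
      e (PresentedGroup.of 4) = (A 1 * A 0) * A 4 * (A 1 * A 0)⁻¹ ∧
      e (PresentedGroup.of 5) =
        (A 3 * A 1 * A 0 * A 4 * A 2) * A 5 * (A 3 * A 1 * A 0 * A 4 * A 2)⁻¹ := by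
  let e : PresentedGroup rels34' ≃* PresentedGroup rels34 :=
    QuotientGroup.congr _ _ substEquiv map_normalClosure_rels34'
  have e_of (i : Fin 6) : e (PresentedGroup.of i) = PresentedGroup.mk rels34 (substWord i) :=
    congrArg (PresentedGroup.mk rels34) (substEquiv_b i)
  refine ⟨e, e_of 0, e_of 1, e_of 2, e_of 3, (e_of 4).trans ?_, e_of 5⟩
  exact congrArg (PresentedGroup.mk rels34) (conj_mul_apply (a 1) (a 0) (a 4)).symm

end G34Presentation
end

section
/- Let B₂₉ be the group presented by generators a_1, a_2, a_3, a_4 and relations: braids a_1a_3a_1 = a_3a_1a_3, a_2a_3a_2 = a_3a_2a_3, a_2a_4a_2 = a_4a_2a_4; length-4 braids a_1a_2a_1a_2 = a_2a_1a_2a_1, a_1a_4a_1a_4 = a_4a_1a_4a_1, a_3a_4a_3a_4 = a_4a_3a_4a_3; and the cycle relations rel_4(a_4,a_2,a_1): a_4a_2a_1a_4 = a_2a_1a_4a_2, rel_4(a_3,a_1,a_4): a_3a_1a_4a_3 = a_1a_4a_3a_1, and rel_6(a_3,a_1,a_2): a_3a_1a_2a_3a_1a_2 = a_1a_2a_3a_1a_2a_3.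 Let B'₂₉ be the group presented by generators s,t,u,v and relations: braids sts = tst, tut = utu, uvu = vuv; length-4 braid tvtv = vtvt; commutations su = us, sv = vs; and rel_6(u,t,v): utvutv = tvutvu (the known presentation of the braid group of the unitary reflection group G₂₉). Then the assignment t ↦ a_1, v ↦ a_2, u ↦ a_3, s ↦ (a_2a_3a_1)⁻¹a_4(a_2a_3a_1) extends to a group isomorphism from B'₂₉ onto B₂₉. -/
/- The new presentation B₂₉ (on the diagram D₂₉) and the known presentation
   B'₂₉ of the braid group of the unitary reflection group G₂₉ are equivalent:
   t ↦ a₁, v ↦ a₂, u ↦ a₃, s ↦ (a₂a₃a₁)⁻¹a₄(a₂a₃a₁) extends to an isomorphism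
   B'₂₉ ≃ B₂₉.  Generators a₁,…,a₄ are indexed by 0,…,3, and s,t,u,v by
   0,1,2,3. -/

namespace G29Presentation

/-- `a i` is the free group generator corresponding to `a_{i+1}`. -/
def a (i : Fin 4) : FreeGroup (Fin 4) := FreeGroup.of i

/-- Relations of the presentation `B₂₉` on the diagram `D₂₉`. -/
def rels29 : Set (FreeGroup (Fin 4)) :=
  { a 0 * a 2 * a 0 * (a 2 * a 0 * a 2)⁻¹,
    a 1 * a 2 * a 1 * (a 2 * a 1 * a 2)⁻¹,
    a 1 * a 3 * a 1 * (a 3 * a 1 * a 3)⁻¹,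
    a 0 * a 1 * a 0 * a 1 * (a 1 * a 0 * a 1 * a 0)⁻¹,
    a 0 * a 3 * a 0 * a 3 * (a 3 * a 0 * a 3 * a 0)⁻¹,
    a 2 * a 3 * a 2 * a 3 * (a 3 * a 2 * a 3 * a 2)⁻¹,
    a 3 * a 1 * a 0 * a 3 * (a 1 * a 0 * a 3 * a 1)⁻¹,
    a 2 * a 0 * a 3 * a 2 * (a 0 * a 3 * a 2 * a 0)⁻¹,
    a 2 * a 0 * a 1 * a 2 * a 0 * a 1 * (a 0 * a 1 * a 2 * a 0 * a 1 * a 2)⁻¹ }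

/-- `b 0, b 1, b 2, b 3` are the free group generators `s, t, u, v`. -/
def b (i : Fin 4) : FreeGroup (Fin 4) := FreeGroup.of i

/-- Relations of the known presentation `B'₂₉` of `Braid(G₂₉)`. -/
def rels29' : Set (FreeGroup (Fin 4)) :=
  { b 0 * b 1 * b 0 * (b 1 * b 0 * b 1)⁻¹,
    b 1 * b 2 * b 1 * (b 2 * b 1 * b 2)⁻¹,
    b 2 * b 3 * b 2 * (b 3 * b 2 * b 3)⁻¹,
    b 1 * b 3 * b 1 * b 3 * (b 3 * b 1 * b 3 * b 1)⁻¹,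
    b 0 * b 2 * (b 2 * b 0)⁻¹,
    b 0 * b 3 * (b 3 * b 0)⁻¹,
    b 2 * b 1 * b 3 * b 2 * b 1 * b 3 * (b 1 * b 3 * b 2 * b 1 * b 3 * b 2)⁻¹ }

/-- `A i` is the image of `a i` in `B₂₉`. -/
def A (i : Fin 4) : PresentedGroup rels29 := PresentedGroup.of i

/-!
Both presentations contain the relations of the braid group of `G(4,4,3)` on `t = a₁`, `u = a₃`,
`v = a₂`; over these, the cycle relation `rel_6(u, t, v)` says that `t` braids with `v u v⁻¹`.
Put `g = v u t`, `x = g s g⁻¹`, `p = v t v⁻¹` and `q = u t u⁻¹`. Conjugation by `g` sends `u` to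
`p`, `v` to `q⁻¹ p q = p q p⁻¹` and `t` to `q⁻¹ v q`. Hence `s` commutes with `u` and `v` and braids
with `t` if and only if `x` commutes with `p` and `q` and braids with `v`. The two commutations are
the cycle relations `rel_4(x, v, t)` and `rel_4(u, t, x)`, and the 4-braid relations of `x` with
`t` and `u` follow by conjugating the one between `t` and `v`.
-/

section Braids

/-- The braid relation of length three: `x` and `y` braid. -/
def Braids {M : Type*} [Mul M] (x y : M) : Prop := x * y * x = y * x * y

/-- The braid relation of length four: `x` and `y` 4-braid. -/
def FourBraids {M : Type*} [Mul M] (x y : M) : Prop := x * y * x * y = y * x * y * x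

theorem Braids.symm {M : Type*} [Mul M] {x y : M} (h : Braids x y) : Braids y x := Eq.symm h

variable {G : Type*} [Group G] {x y z : G}

theorem braids_conj_iff (g : G) : Braids (g * x * g⁻¹) (g * y * g⁻¹) ↔ Braids x y := by
  simp only [Braids, conj_mul, mul_left_inj, mul_right_inj]

theorem fourBraids_conj_iff (g : G) :
    FourBraids (g * x * g⁻¹) (g * y * g⁻¹) ↔ FourBraids x y := by
  simp only [FourBraids, conj_mul, mul_left_inj, mul_right_inj]

theorem Braids.mul_mul_inv_eq (h : Braids x y) : x * y * x⁻¹ = y⁻¹ * x * y := by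
  calc x * y * x⁻¹ = y⁻¹ * (y * x * y) * x⁻¹ := by group
    _ = y⁻¹ * (x * y * x) * x⁻¹ := by rw [h]
    _ = y⁻¹ * x * y := by group

theorem Braids.conj_mul_left (h : Braids x y) : x * y * x * (x * y)⁻¹ = y := by
  rw [mul_inv_eq_iff_eq_mul, ← mul_assoc]
  exact h

theorem Braids.conj_conj_self (h : Braids x y) : y * x * y⁻¹ * y * (y * x * y⁻¹)⁻¹ = x := by
  calc y * x * y⁻¹ * y * (y * x * y⁻¹)⁻¹ = y * x * y * (y * x)⁻¹ := by group
    _ = x := h.symm.conj_mul_left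

theorem commute_conj_right_iff (h : Commute x y) : Commute x (y * z * y⁻¹) ↔ Commute x z := by
  rw [← Commute.conj_iff y (a := x) (b := z), h.symm.mul_inv_cancel]

theorem braids_conj_right_iff (h : Commute x y) : Braids x (y * z * y⁻¹) ↔ Braids x z := by
  rw [← braids_conj_iff y (x := x) (y := z), h.symm.mul_inv_cancel]

theorem Braids.cycle_four_iff_commute (h : Braids x y) :
    x * y * z * x = y * z * x * y ↔ Commute x (y * z * y⁻¹) := by
  have expand_right : y * z * x * y = y * z * y⁻¹ * x * (y * x) := by
    calc y * z * x * y = y * z * y⁻¹ * (y * x * y) := by group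
      _ = y * z * y⁻¹ * (x * y * x) := by rw [h]
      _ = y * z * y⁻¹ * x * (y * x) := by group
  have expand_left : x * y * z * x = x * (y * z * y⁻¹) * (y * x) := by group
  rw [expand_left, expand_right, mul_left_inj, commute_iff_eq]

theorem Braids.cycle_four_iff_commute_conj (h : Braids x y) :
    y * x * z * y = x * z * y * x ↔ Commute z (y * x * y⁻¹) := by
  have conj_eq : x * (y * x * y⁻¹) * x⁻¹ = y := by
    rw [h.symm.mul_mul_inv_eq]; group
  rw [h.symm.cycle_four_iff_commute, ← Commute.conj_iff x (a := z), conj_eq, Commute.symm_iff]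

theorem Braids.cycle_six_iff_braids (hxy : Braids x y) (hyz : Braids y z) :
    y * x * z * y * x * z = x * z * y * x * z * y ↔ Braids x (z * y * z⁻¹) := by
  have conj_eq : z * y * z⁻¹ = y⁻¹ * z * y := hyz.symm.mul_mul_inv_eq
  have expand_left :
      x * (z * y * z⁻¹) * x = (x * y)⁻¹ * (y * x * z * y * x * z) * z⁻¹ := by
    calc x * (z * y * z⁻¹) * x = (x * y)⁻¹ * (x * y * x) * y⁻¹ * z * y * x := by
          rw [conj_eq]; group
      _ = (x * y)⁻¹ * (y * x * y) * y⁻¹ * z * y * x := by rw [hxy]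
      _ = (x * y)⁻¹ * (y * x * z * y * x * z) * z⁻¹ := by group
  have expand_right :
      z * y * z⁻¹ * x * (z * y * z⁻¹) = (x * y)⁻¹ * (x * z * y * x * z * y) * z⁻¹ := by
    calc z * y * z⁻¹ * x * (z * y * z⁻¹) = y⁻¹ * z * y * x * (z * y * z⁻¹) := by rw [conj_eq]
      _ = (x * y)⁻¹ * (x * z * y * x * z * y) * z⁻¹ := by group
  rw [Braids, expand_left, expand_right, mul_left_inj, mul_right_inj]

theorem Braids.fourBraids_iff_of_commute (h : Braids x y) (hcomm : Commute x (y * z * y⁻¹)) :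
    FourBraids z x ↔ FourBraids z y := by
  have conj_z : x * y * z * (x * y)⁻¹ = y * z * y⁻¹ := by
    rw [← hcomm.mul_inv_cancel]; group
  calc FourBraids z x ↔ FourBraids (y * z * y⁻¹) (y * y * y⁻¹) := by
        rw [← fourBraids_conj_iff (x * y), conj_z, h.conj_mul_left, mul_inv_cancel_right]
    _ ↔ FourBraids z y := fourBraids_conj_iff y

end Braids

section Relations

/-- The relations of the braid group of the reflection group `G(4,4,3)`, a parabolic subgroup of
`G₂₉`: the relations common to both presentations. -/
structure G443Relations {M : Type*} [Mul M] (t u v : M) : Prop where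
  braids_tu : Braids t u
  braids_uv : Braids u v
  fourBraids_tv : FourBraids t v
  cycle_utv : u * t * v * u * t * v = t * v * u * t * v * u

/-- The relations of the known presentation `B'₂₉`, for elements of an arbitrary group in place of
the generators. -/
structure KnownRelations {M : Type*} [Mul M] (s t u v : M) : Prop
    extends G443Relations t u v where
  braids_st : Braids s t
  commute_su : Commute s u
  commute_sv : Commute s v

/-- The relations of the presentation `B₂₉` on the diagram `D₂₉`, for elements of an arbitrary group
in place of the generators. -/
structure DiagramRelations {M : Type*} [Mul M] (a₁ a₂ a₃ a₄ : M) : Prop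
    extends G443Relations a₁ a₃ a₂ where
  braids_24 : Braids a₂ a₄
  fourBraids_14 : FourBraids a₁ a₄
  fourBraids_34 : FourBraids a₃ a₄
  cycle_421 : a₄ * a₂ * a₁ * a₄ = a₂ * a₁ * a₄ * a₂
  cycle_314 : a₃ * a₁ * a₄ * a₃ = a₁ * a₄ * a₃ * a₁

variable {G : Type*} [Group G] {s t u v x : G}

namespace G443Relations

theorem braids_t_conj_u (h : G443Relations t u v) : Braids t (v * u * v⁻¹) :=
  (h.braids_tu.cycle_six_iff_braids h.braids_uv).1 h.cycle_utv

theorem braids_v_conj_t (h : G443Relations t u v) : Braids v (u * t * u⁻¹) := by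
  rw [← braids_conj_iff u⁻¹]
  have conj_v : u⁻¹ * v * u⁻¹⁻¹ = v * u * v⁻¹ := by
    rw [inv_inv, h.braids_uv.symm.mul_mul_inv_eq]
  have conj_t : u⁻¹ * (u * t * u⁻¹) * u⁻¹⁻¹ = t := by group
  rw [conj_v, conj_t]
  exact h.braids_t_conj_u.symm

theorem braids_conj_t_conj_t (h : G443Relations t u v) :
    Braids (v * t * v⁻¹) (u * t * u⁻¹) := by
  rw [← braids_conj_iff (v * t)]
  have conj_left : v * t * (v * t * v⁻¹) * (v * t)⁻¹ = t := by
    calc v * t * (v * t * v⁻¹) * (v * t)⁻¹ = v * t * v * t * (v * t * v)⁻¹ := by group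
      _ = t * v * t * v * (v * t * v)⁻¹ := by rw [h.fourBraids_tv]
      _ = t := by group
  have conj_right : v * t * (u * t * u⁻¹) * (v * t)⁻¹ = v * u * v⁻¹ := by
    rw [h.braids_tu.symm.mul_mul_inv_eq]; group
  rw [conj_left, conj_right]
  exact h.braids_t_conj_u

theorem conj_vut_u (h : G443Relations t u v) :
    v * u * t * u * (v * u * t)⁻¹ = v * t * v⁻¹ := by
  calc v * u * t * u * (v * u * t)⁻¹ = v * (u * t * u * (u * t)⁻¹) * v⁻¹ := by group
    _ = v * t * v⁻¹ := by rw [h.braids_tu.symm.conj_mul_left]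

theorem conj_vut_t (h : G443Relations t u v) :
    v * u * t * t * (v * u * t)⁻¹ = (u * t * u⁻¹)⁻¹ * v * (u * t * u⁻¹) := by
  rw [← h.braids_v_conj_t.mul_mul_inv_eq]
  group

theorem conj_vut_v (h : G443Relations t u v) :
    v * u * t * v * (v * u * t)⁻¹ =
      v * t * v⁻¹ * (u * t * u⁻¹) * (v * t * v⁻¹)⁻¹ := by
  rw [h.braids_conj_t_conj_t.mul_mul_inv_eq]
  have conj_q : v * (u * t * u⁻¹) * v⁻¹ = (u * t * u⁻¹)⁻¹ * v * (u * t * u⁻¹) :=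
    h.braids_v_conj_t.mul_mul_inv_eq
  have conj_u : u * t * u⁻¹ * u * (u * t * u⁻¹)⁻¹ = t := h.braids_tu.conj_conj_self
  have conj_v : u * v * u⁻¹ = v⁻¹ * u * v := h.braids_uv.mul_mul_inv_eq
  calc v * u * t * v * (v * u * t)⁻¹
      = v * (u * t * u⁻¹) * (u * v * u⁻¹) * (v * (u * t * u⁻¹))⁻¹ := by group
    _ = v * (u * t * u⁻¹) * (v⁻¹ * u * v) * (v * (u * t * u⁻¹))⁻¹ := by rw [conj_v]
    _ = v * (u * t * u⁻¹) * v⁻¹ * u * (v * (u * t * u⁻¹) * v⁻¹)⁻¹ := by group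
    _ = (u * t * u⁻¹)⁻¹ * v * (u * t * u⁻¹) * u * ((u * t * u⁻¹)⁻¹ * v * (u * t * u⁻¹))⁻¹ := by
      rw [conj_q]
    _ = (u * t * u⁻¹)⁻¹ * v * (u * t * u⁻¹ * u * (u * t * u⁻¹)⁻¹) * v⁻¹ * (u * t * u⁻¹) := by
      group
    _ = (u * t * u⁻¹)⁻¹ * (v * t * v⁻¹) * (u * t * u⁻¹) := by rw [conj_u]; group

theorem knownRelations_iff (h : G443Relations t u v) :
    KnownRelations s t u v ↔ Commute s u ∧ Commute s v ∧ Braids s t :=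
  ⟨fun hs => ⟨hs.commute_su, hs.commute_sv, hs.braids_st⟩,
    fun ⟨hsu, hsv, hst⟩ => ⟨h, hst, hsu, hsv⟩⟩

theorem diagramRelations_iff (h : G443Relations t u v) :
    DiagramRelations t v u x ↔
      Commute x (v * t * v⁻¹) ∧ Commute x (u * t * u⁻¹) ∧ Braids x v := by
  constructor
  · intro hx
    exact ⟨hx.braids_24.symm.cycle_four_iff_commute.1 hx.cycle_421,
      h.braids_tu.cycle_four_iff_commute_conj.1 hx.cycle_314, hx.braids_24.symm⟩
  · rintro ⟨hp, hq, hxv⟩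
    have fourBraids_tx : FourBraids t x :=
      (hxv.fourBraids_iff_of_commute hp).2 h.fourBraids_tv
    have fourBraids_ux : FourBraids u x := by
      rw [← fourBraids_conj_iff (u * t * u⁻¹), h.braids_tu.conj_conj_self, hq.symm.mul_inv_cancel]
      exact fourBraids_tx
    exact ⟨h, hxv.symm, fourBraids_tx, fourBraids_ux, hxv.cycle_four_iff_commute.2 hp,
      h.braids_tu.cycle_four_iff_commute_conj.2 hq⟩

end G443Relations

theorem knownRelations_iff_diagramRelations :
    KnownRelations s t u v ↔ DiagramRelations t v u (v * u * t * s * (v * u * t)⁻¹) := by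
  suffices equiv : G443Relations t u v →
      (KnownRelations s t u v ↔ DiagramRelations t v u (v * u * t * s * (v * u * t)⁻¹)) from
    ⟨fun hs => (equiv hs.toG443Relations).1 hs, fun hx => (equiv hx.toG443Relations).2 hx⟩
  intro h
  rw [h.knownRelations_iff, h.diagramRelations_iff, ← Commute.conj_iff (v * u * t), h.conj_vut_u]
  refine and_congr_right fun hp => ?_
  rw [← Commute.conj_iff (v * u * t), h.conj_vut_v, commute_conj_right_iff hp]
  refine and_congr_right fun hq => ?_
  rw [← braids_conj_iff (v * u * t), h.conj_vut_t]
  simpa only [inv_inv] using braids_conj_right_iff hq.inv_right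

end Relations

section Presentations

variable {G : Type*} [Group G]

theorem lift_eq_one_on_rels29_iff (f : Fin 4 → G) :
    (∀ r ∈ rels29, FreeGroup.lift f r = 1) ↔ DiagramRelations (f 0) (f 1) (f 2) (f 3) := by
  simp only [rels29, a, Set.mem_insert_iff, Set.mem_singleton_iff, forall_eq_or_imp, forall_eq,
    map_mul, map_inv, FreeGroup.lift_apply_of, mul_inv_eq_one]
  exact ⟨fun ⟨h13, h23, h24, h12, h14, h34, h421, h314, h312⟩ =>
      ⟨⟨h13, h23.symm, h12, h312⟩, h24, h14, h34, h421, h314⟩,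
    fun ⟨⟨h13, h32, h12, h312⟩, h24, h14, h34, h421, h314⟩ =>
      ⟨h13, h32.symm, h24, h12, h14, h34, h421, h314, h312⟩⟩

theorem lift_eq_one_on_rels29'_iff (f : Fin 4 → G) :
    (∀ r ∈ rels29', FreeGroup.lift f r = 1) ↔ KnownRelations (f 0) (f 1) (f 2) (f 3) := by
  simp only [rels29', b, Set.mem_insert_iff, Set.mem_singleton_iff, forall_eq_or_imp, forall_eq,
    map_mul, map_inv, FreeGroup.lift_apply_of, mul_inv_eq_one]
  exact ⟨fun ⟨hst, htu, huv, htv, hsu, hsv, hutv⟩ => ⟨⟨htu, huv, htv, hutv⟩, hst, hsu, hsv⟩,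
    fun ⟨⟨htu, huv, htv, hutv⟩, hst, hsu, hsv⟩ => ⟨hst, htu, huv, htv, hsu, hsv, hutv⟩⟩

theorem lift_of_eq_one_of_mem {α : Type*} {rels : Set (FreeGroup α)} {r : FreeGroup α}
    (hr : r ∈ rels) : FreeGroup.lift (PresentedGroup.of (rels := rels)) r = 1 := by
  have lift_of : FreeGroup.lift (PresentedGroup.of (rels := rels)) = PresentedGroup.mk rels := by
    ext i
    exact FreeGroup.lift_apply_of
  rw [lift_of, PresentedGroup.one_of_mem hr]

/-- `B i` is the image of `b i` in `B'₂₉`. -/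
def B (i : Fin 4) : PresentedGroup rels29' := PresentedGroup.of i

theorem diagramRelations_A : DiagramRelations (A 0) (A 1) (A 2) (A 3) :=
  (lift_eq_one_on_rels29_iff A).1 fun _ => lift_of_eq_one_of_mem

theorem knownRelations_B : KnownRelations (B 0) (B 1) (B 2) (B 3) :=
  (lift_eq_one_on_rels29'_iff B).1 fun _ => lift_of_eq_one_of_mem

/-- The images in `B₂₉` of the generators `s, t, u, v` of `B'₂₉`. -/
def knownImages : Fin 4 → PresentedGroup rels29 :=
  ![(A 1 * A 2 * A 0)⁻¹ * A 3 * (A 1 * A 2 * A 0), A 0, A 2, A 1]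

/-- The images in `B'₂₉` of the generators `a₁, a₂, a₃, a₄` of `B₂₉`. -/
def diagramImages : Fin 4 → PresentedGroup rels29' :=
  ![B 1, B 3, B 2, B 3 * B 2 * B 1 * B 0 * (B 3 * B 2 * B 1)⁻¹]

theorem lift_knownImages_eq_one : ∀ r ∈ rels29', FreeGroup.lift knownImages r = 1 := by
  have conj_eq : A 1 * A 2 * A 0 * ((A 1 * A 2 * A 0)⁻¹ * A 3 * (A 1 * A 2 * A 0)) *
      (A 1 * A 2 * A 0)⁻¹ = A 3 := by group
  have relations := diagramRelations_A
  rw [← conj_eq] at relations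
  exact (lift_eq_one_on_rels29'_iff knownImages).2 (knownRelations_iff_diagramRelations.2 relations)

theorem lift_diagramImages_eq_one : ∀ r ∈ rels29, FreeGroup.lift diagramImages r = 1 :=
  (lift_eq_one_on_rels29_iff diagramImages).2
    (knownRelations_iff_diagramRelations.1 knownRelations_B)

/-- The homomorphism `B'₂₉ → B₂₉` sending `s` to `(a₂ a₃ a₁)⁻¹ a₄ (a₂ a₃ a₁)`. -/
def toDiagram : PresentedGroup rels29' →* PresentedGroup rels29 :=
  PresentedGroup.toGroup lift_knownImages_eq_one

/-- The inverse `B₂₉ → B'₂₉` of `toDiagram`, sending `a₄` to `(v u t) s (v u t)⁻¹`. -/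
def toKnown : PresentedGroup rels29 →* PresentedGroup rels29' :=
  PresentedGroup.toGroup lift_diagramImages_eq_one

theorem toDiagram_B (i : Fin 4) : toDiagram (B i) = knownImages i :=
  PresentedGroup.toGroup.of lift_knownImages_eq_one

theorem toKnown_A (i : Fin 4) : toKnown (A i) = diagramImages i :=
  PresentedGroup.toGroup.of lift_diagramImages_eq_one

theorem toKnown_comp_toDiagram : toKnown.comp toDiagram = MonoidHom.id _ := by
  refine PresentedGroup.ext fun i => ?_
  change toKnown (toDiagram (B i)) = B i
  rw [toDiagram_B]
  fin_cases i <;> simp [knownImages, toKnown_A, diagramImages, mul_assoc]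

theorem toDiagram_comp_toKnown : toDiagram.comp toKnown = MonoidHom.id _ := by
  refine PresentedGroup.ext fun i => ?_
  change toDiagram (toKnown (A i)) = A i
  rw [toKnown_A]
  fin_cases i <;> simp [diagramImages, toDiagram_B, knownImages, mul_assoc]

end Presentations

theorem B29_iso :
    ∃ e : PresentedGroup rels29' ≃* PresentedGroup rels29,
      e (PresentedGroup.of 0) =
        (A 1 * A 2 * A 0)⁻¹ * A 3 * (A 1 * A 2 * A 0) ∧
      e (PresentedGroup.of 1) = A 0 ∧
      e (PresentedGroup.of 2) = A 2 ∧
      e (PresentedGroup.of 3) = A 1 := by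
  exact ⟨toDiagram.toMulEquiv toKnown toKnown_comp_toDiagram toDiagram_comp_toKnown,
    toDiagram_B 0, toDiagram_B 1, toDiagram_B 2, toDiagram_B 3⟩

end G29Presentation
end

section
/- Let V be a finite-dimensional complex inner product space and K a ℤ[ω]-submodule of V that spans V over ℂ and satisfies ⟨x,y⟩ ∈ pℤ[ω] for all x,y ∈ K. Let Φ ⊆ K be a set of vectors of norm 3 that generates K as a ℤ[ω]-module. For r ∈ Φ the ω-reflection φ_r maps K onto K; let G be the subgroup of the unitary group of V generated by {φ_r : r ∈ Φ}, so G acts on K by ℤ[ω]-linear isometries. For r ∈ Φ and m ∈ ℤ[ω], define the ℤ[ω]-linear automorphism ψ_{r,m} of K ⊕ ℤ[ω] by ψ_{r,m}(y,n) = (φ_r(y), n − m·p⁻¹⟨r,y⟩) (note p⁻¹⟨r,y⟩ ∈ ℤ[ω]), and let G̃ be the subgroup of the group of ℤ[ω]-module automorphisms of K ⊕ ℤ[ω] generated by all ψ_{r,m}. Then the map from the semidirect product K ⋊ G (with G acting on K by restriction, product (x,g)(y,h) = (x+gy, gh)) to G̃ sending (x,g) to the automorphism (y,n) ↦ (g·y,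 n − p⁻¹⟨x, g·y⟩) is a group isomorphism; in particular the affine reflection group G̃ is isomorphic to K ⋊ G. -/
/- The affine reflection group G̃ associated to an Eisenstein root system Φ
   spanning a lattice K (with all inner products in pℤ[ω]) is isomorphic to
   the semidirect product K ⋊ G:  the map sending (x, g) to the automorphism
   (y, n) ↦ (g·y, n − p⁻¹⟨x, g·y⟩) of K ⊕ ℤ[ω] is a group isomorphism onto
   the subgroup G̃ generated by the ψ_{r,m}. -/

open scoped ComplexInnerProductSpace

set_option synthInstance.maxHeartbeats 2000000
set_option maxHeartbeats 2000000

/-- `ω = e^{2πi/3}`. -/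
noncomputable def ω : ℂ := Complex.exp (2 * Real.pi * Complex.I / 3)

/-- `p = 1 - ω̄`. -/
noncomputable def p : ℂ := 1 - starRingEnd ℂ ω

/-- The ring of Eisenstein integers `ℤ[ω]`, as a subring of `ℂ`. -/
noncomputable def Eis : Subring ℂ := Subring.closure {ω}

/-! The affine reflection `ψ_{r,m}` is the shear `(y, n) ↦ (y, n - B(m̄ r, y))` of `K ⊕ ℤ[ω]`,
where `B = p⁻¹⟨·,·⟩`, followed by `φ_r` on the first summand. The shears form a copy of `K`,
normalized by `G` because `G` preserves `B`, so `K ⋊ G` acts on `K ⊕ ℤ[ω]`. The group generated by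
the `ψ_{r,m}` contains `G`, by the case `m = 0`; dividing by `φ_r`, it contains the shears by all
multiples of roots, hence all shears. The action is faithful since `B` is nondegenerate and `K`
spans `V`. -/

section Generators

theorem span_range_inclusion_eq_top {R M : Type*} [Semiring R] [AddCommMonoid M] [Module R M]
    {K : Submodule R M} {Φ : Set M} (hΦ : Submodule.span R Φ = K) (hΦK : Φ ⊆ K) :
    Submodule.span R (Set.range (Set.inclusion hΦK : Φ → K)) = ⊤ := by
  subst hΦ
  rw [Set.range_inclusion hΦK]
  exact Submodule.span_span_coe_preimage

theorem closure_range_codRestrict_eq_top {ι H : Type*} [Group H] {G : Subgroup H} {γ : ι → H}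
    (hγ : Subgroup.closure (Set.range γ) = G) (hγG : ∀ i, γ i ∈ G) :
    Subgroup.closure (Set.range fun i => (⟨γ i, hγG i⟩ : G)) = ⊤ := by
  subst hγ
  rw [← Subgroup.closure_closure_coe_preimage]
  congr 1
  ext g
  simp [Subtype.ext_iff]

end Generators

section AffineExtension

open SemidirectProduct

variable {R K G : Type*} [CommRing R] [AddCommGroup K] [Module R K] [Group G]

/-- The action on the group `Multiplicative K` induced by a linear action `ρ` on `K`, from which
the semidirect product `K ⋊ G` is formed. -/
def multiplicativeAction (ρ : G →* (K ≃ₗ[R] K)) : G →* MulAut (Multiplicative K) :=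
  (MulAutMultiplicative K).symm.toMonoidHom.comp
    ((DistribMulAction.toAddAut (K ≃ₗ[R] K) K).comp ρ)

@[simp]
theorem multiplicativeAction_apply (ρ : G →* (K ≃ₗ[R] K)) (g : G) (x : Multiplicative K) :
    multiplicativeAction ρ g x = Multiplicative.ofAdd (ρ g x.toAdd) :=
  rfl

theorem closure_inr_mul_inl_smul_eq_top (ρ : G →* (K ≃ₗ[R] K)) {ι : Type*} {v : ι → K}
    {γ : ι → G} (hv : Submodule.span R (Set.range v) = ⊤)
    (hγ : Subgroup.closure (Set.range γ) = ⊤) :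
    Subgroup.closure (Set.range fun q : ι × R =>
      (inr (γ q.1) * inl (Multiplicative.ofAdd (q.2 • v q.1)) :
        Multiplicative K ⋊[multiplicativeAction ρ] G)) = ⊤ := by
  set H := Subgroup.closure (Set.range fun q : ι × R =>
    (inr (γ q.1) * inl (Multiplicative.ofAdd (q.2 • v q.1)) :
      Multiplicative K ⋊[multiplicativeAction ρ] G))
  have generator_mem (i : ι) (a : R) :
      inr (γ i) * inl (Multiplicative.ofAdd (a • v i)) ∈ H :=
    Subgroup.subset_closure ⟨(i, a), rfl⟩
  have inr_generator_mem (i : ι) : inr (γ i) ∈ H := by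
    simpa using generator_mem i 0
  have inr_mem (g : G) : inr g ∈ H := by
    have hle : Subgroup.closure (Set.range γ) ≤ H.comap inr :=
      (Subgroup.closure_le _).2 (Set.range_subset_iff.2 inr_generator_mem)
    exact hle (hγ ▸ Subgroup.mem_top g)
  have inl_mem (x : K) : inl (Multiplicative.ofAdd x) ∈ H := by
    have hx : x ∈ Submodule.span R (Set.range v) := hv ▸ Submodule.mem_top
    induction hx using Submodule.closure_induction with
    | zero => simp
    | add x y _ _ hx hy => simpa only [ofAdd_add, map_mul] using mul_mem hx hy
    | smul_mem a x hx =>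
      obtain ⟨i, rfl⟩ := hx
      exact (Subgroup.mul_mem_cancel_left H (inr_generator_mem i)).1 (generator_mem i a)
  refine (Subgroup.eq_top_iff' H).2 fun s => ?_
  rw [← inl_left_mul_inr_right s]
  exact mul_mem (inl_mem s.left.toAdd) (inr_mem s.right)

variable {σ : R →+* R} (B : K →ₛₗ[σ] K →ₗ[R] R)

/-- The automorphism `(y, n) ↦ (e y, n - m B(r, y))` of `K ⊕ R`; it is the affine reflection
`ψ_{r,m}` when `e` is the reflection in `r` and `B = p⁻¹⟨·,·⟩`. -/
def affineReflection (e : K ≃ₗ[R] K) (r : K) (m : R) : (K × R) ≃ₗ[R] (K × R) :=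
  e.skewProd (.refl R R) (-(m • B r))

@[simp]
theorem affineReflection_apply (e : K ≃ₗ[R] K) (r : K) (m : R) (y : K) (n : R) :
    affineReflection B e r m (y, n) = (e y, n - m * B r y) := by
  simp [affineReflection, sub_eq_add_neg]

variable (ρ : G →* (K ≃ₗ[R] K))

/-- The action `(x, g) ↦ ((y, n) ↦ (g y, n - B(x, g y)))` of `K ⋊ G` on `K ⊕ R`, for a group `G`
of isometries of the sesquilinear form `B`. -/
def affineAction (hB : ∀ g x y, B (ρ g x) (ρ g y) = B x y) :
    Multiplicative K ⋊[multiplicativeAction ρ] G →* ((K × R) ≃ₗ[R] (K × R)) where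
  toFun s := (ρ s.right).skewProd (.refl R R) (-(B s.left.toAdd ∘ₗ (ρ s.right).toLinearMap))
  map_one' := by ext <;> simp
  map_mul' s t := by
    ext ⟨y, n⟩
    · simp
    · simp [hB, add_assoc]

@[simp]
theorem affineAction_apply (hB : ∀ g x y, B (ρ g x) (ρ g y) = B x y)
    (s : Multiplicative K ⋊[multiplicativeAction ρ] G) (y : K) (n : R) :
    affineAction B ρ hB s (y, n) = (ρ s.right y, n - B s.left.toAdd (ρ s.right y)) := by
  simp [affineAction, sub_eq_add_neg]

theorem affineAction_injective (hB : ∀ g x y, B (ρ g x) (ρ g y) = B x y)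
    (hρ : Function.Injective ρ) (hsep : B.SeparatingLeft) :
    Function.Injective (affineAction B ρ hB) := by
  refine (injective_iff_map_eq_one _).2 fun s hs => ?_
  have apply_eq (y : K) (n : R) :
      (ρ s.right y, n - B s.left.toAdd (ρ s.right y)) = (y, n) := by
    rw [← affineAction_apply B ρ hB, hs, LinearEquiv.coe_one, id]
  have right_eq : s.right = 1 :=
    (injective_iff_map_eq_one ρ).1 hρ _ (LinearEquiv.ext fun y => congrArg Prod.fst (apply_eq y 0))
  have left_eq : s.left.toAdd = 0 :=
    hsep _ fun y => by simpa [right_eq] using congrArg Prod.snd (apply_eq y 0)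
  exact SemidirectProduct.ext left_eq right_eq

theorem affineAction_inr_mul_inl_smul (hB : ∀ g x y, B (ρ g x) (ρ g y) = B x y)
    (g : G) (a : R) (r : K) :
    affineAction B ρ hB (inr g * inl (Multiplicative.ofAdd (a • r))) =
      affineReflection B (ρ g) r (σ a) := by
  ext ⟨y, n⟩ <;> simp

theorem range_affineAction [RingHomSurjective σ] (hB : ∀ g x y, B (ρ g x) (ρ g y) = B x y)
    {ι : Type*} {v : ι → K} {γ : ι → G} (hv : Submodule.span R (Set.range v) = ⊤)
    (hγ : Subgroup.closure (Set.range γ) = ⊤) :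
    (affineAction B ρ hB).range =
      Subgroup.closure {e | ∃ i m, e = affineReflection B (ρ (γ i)) (v i) m} := by
  rw [MonoidHom.range_eq_map, ← closure_inr_mul_inl_smul_eq_top ρ hv hγ, MonoidHom.map_closure,
    ← Set.range_comp]
  congr 1
  ext e
  constructor
  · rintro ⟨⟨i, a⟩, rfl⟩
    exact ⟨i, σ a, affineAction_inr_mul_inl_smul B ρ hB _ _ _⟩
  · rintro ⟨i, m, rfl⟩
    obtain ⟨a, rfl⟩ := σ.surjective m
    exact ⟨(i, a), affineAction_inr_mul_inl_smul B ρ hB _ _ _⟩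

theorem exists_mulEquiv_closure_affineReflection [RingHomSurjective σ]
    (hB : ∀ g x y, B (ρ g x) (ρ g y) = B x y) (hρ : Function.Injective ρ)
    (hsep : B.SeparatingLeft) {ι : Type*} {v : ι → K} {γ : ι → G}
    (hv : Submodule.span R (Set.range v) = ⊤) (hγ : Subgroup.closure (Set.range γ) = ⊤) :
    ∃ e : Multiplicative K ⋊[multiplicativeAction ρ] G ≃*
        Subgroup.closure {e | ∃ i m, e = affineReflection B (ρ (γ i)) (v i) m},
      ∀ x g y n, (e ⟨Multiplicative.ofAdd x, g⟩ : (K × R) ≃ₗ[R] (K × R)) (y, n) =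
        (ρ g y, n - B x (ρ g y)) :=
  ⟨(MonoidHom.ofInjective (affineAction_injective B ρ hB hρ hsep)).trans
    (MulEquiv.subgroupCongr (range_affineAction B ρ hB hv hγ)),
    fun x g => affineAction_apply B ρ hB ⟨Multiplicative.ofAdd x, g⟩⟩

end AffineExtension

section Lattice

theorem conj_restrict_surjective {S : Type*} [CommRing S] [StarRing S] {R : Subring S}
    (hR : ∀ a ∈ R, starRingEnd S a ∈ R) :
    Function.Surjective ((starRingEnd S).restrict R R hR) :=
  fun a => ⟨⟨_, hR a a.2⟩, Subtype.ext (starRingEnd_self_apply (a : S))⟩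

variable {𝕜 V : Type*} [RCLike 𝕜] [NormedAddCommGroup V] [InnerProductSpace 𝕜 V]
  {R : Subring 𝕜} (K : Submodule R V)

/-- The form `c⟨x, y⟩` on the lattice `K`, taking values in `R`; it is conjugate-linear in `x`. -/
def scaledInner (hR : ∀ a ∈ R, starRingEnd 𝕜 a ∈ R) {c : 𝕜}
    (hc : ∀ x ∈ K, ∀ y ∈ K, c * inner 𝕜 x y ∈ R) :
    K →ₛₗ[(starRingEnd 𝕜).restrict R R hR] K →ₗ[R] R :=
  LinearMap.mk₂'ₛₗ _ _ (fun x y => ⟨c * inner 𝕜 (x : V) (y : V), hc x x.2 y y.2⟩)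
    (fun x x' y => Subtype.ext <| by simp [inner_add_left, mul_add])
    (fun a x y => Subtype.ext <| by simp [Subring.smul_def, inner_smul_left, mul_left_comm])
    (fun x y y' => Subtype.ext <| by simp [inner_add_right, mul_add])
    (fun a x y => Subtype.ext <| by simp [Subring.smul_def, inner_smul_right, mul_left_comm])

@[simp]
theorem coe_scaledInner_apply (hR : ∀ a ∈ R, starRingEnd 𝕜 a ∈ R) {c : 𝕜}
    (hc : ∀ x ∈ K, ∀ y ∈ K, c * inner 𝕜 x y ∈ R) (x y : K) :
    (scaledInner K hR hc x y : 𝕜) = c * inner 𝕜 (x : V) (y : V) :=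
  rfl

theorem scaledInner_separatingLeft (hR : ∀ a ∈ R, starRingEnd 𝕜 a ∈ R) {c : 𝕜} (hc0 : c ≠ 0)
    (hc : ∀ x ∈ K, ∀ y ∈ K, c * inner 𝕜 x y ∈ R) : (scaledInner K hR hc).SeparatingLeft := by
  intro x hx
  have inner_self : c * inner 𝕜 (x : V) (x : V) = 0 := congrArg Subtype.val (hx x)
  simpa [hc0] using inner_self

variable {K} {G : Subgroup (V ≃ₗᵢ[𝕜] V)}

/-- The action on the lattice `K` of a group `G` of isometries of `V` that preserves `K`. -/
def latticeAction (hGK : ∀ g ∈ G, ∀ y ∈ K, g y ∈ K) : G →* (K ≃ₗ[R] K) :=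
  (LinearMap.GeneralLinearGroup.generalLinearEquiv R K).toMonoidHom.comp <|
    MonoidHom.toHomUnits
      { toFun g := (g.1.toLinearEquiv.toLinearMap.restrictScalars R).restrict (hGK g.1 g.2)
        map_one' := rfl
        map_mul' _ _ := rfl }

@[simp]
theorem coe_latticeAction_apply (hGK : ∀ g ∈ G, ∀ y ∈ K, g y ∈ K) (g : G) (y : K) :
    (latticeAction hGK g y : V) = g.1 y :=
  rfl

theorem latticeAction_injective (hGK : ∀ g ∈ G, ∀ y ∈ K, g y ∈ K)
    (hspan : Submodule.span 𝕜 (K : Set V) = ⊤) : Function.Injective (latticeAction hGK) := by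
  intro g h hgh
  have eqOn_lattice : Set.EqOn g.1.toLinearEquiv.toLinearMap h.1.toLinearEquiv.toLinearMap K :=
    fun y hy => congrArg (fun e : K ≃ₗ[R] K => (e ⟨y, hy⟩ : V)) hgh
  exact Subtype.ext (LinearIsometryEquiv.ext
    (LinearMap.congr_fun (LinearMap.ext_on hspan eqOn_lattice)))

theorem scaledInner_latticeAction (hR : ∀ a ∈ R, starRingEnd 𝕜 a ∈ R) {c : 𝕜}
    (hc : ∀ x ∈ K, ∀ y ∈ K, c * inner 𝕜 x y ∈ R) (hGK : ∀ g ∈ G, ∀ y ∈ K, g y ∈ K)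
    (g : G) (x y : K) :
    scaledInner K hR hc (latticeAction hGK g x) (latticeAction hGK g y) =
      scaledInner K hR hc x y :=
  Subtype.ext <| by simp

theorem eq_affineReflection_scaledInner (hR : ∀ a ∈ R, starRingEnd 𝕜 a ∈ R) {c : 𝕜}
    (hc : ∀ x ∈ K, ∀ y ∈ K, c * inner 𝕜 x y ∈ R) (hGK : ∀ g ∈ G, ∀ y ∈ K, g y ∈ K)
    {e : (K × R) ≃ₗ[R] (K × R)} {g : G} {r : K} {m : R}
    (he : ∀ (y : K) (n : R), ((e (y, n)).1 : V) = g.1 y ∧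
      ((e (y, n)).2 : 𝕜) = n - m * (c * inner 𝕜 (r : V) (y : V))) :
    e = affineReflection (scaledInner K hR hc) (latticeAction hGK g) r m := by
  refine LinearEquiv.ext fun ⟨y, n⟩ => ?_
  rw [affineReflection_apply]
  exact Prod.ext (Subtype.ext (he y n).1) (Subtype.ext (he y n).2)

theorem affine_reflection_group_iso_semidirect_general (hR : ∀ a ∈ R, starRingEnd 𝕜 a ∈ R)
    (hspan : Submodule.span 𝕜 (K : Set V) = ⊤) {c : 𝕜} (hc0 : c ≠ 0)
    (hc : ∀ x ∈ K, ∀ y ∈ K, c * inner 𝕜 x y ∈ R)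
    {Φ : Set V} (hΦ : Submodule.span R Φ = K) {φ : V → (V ≃ₗᵢ[𝕜] V)}
    (hG : G = Subgroup.closure {g | ∃ r ∈ Φ, g = φ r}) (hGK : ∀ g ∈ G, ∀ y ∈ K, g y ∈ K)
    {ψ : V → R → ((K × R) ≃ₗ[R] (K × R))}
    (hψ : ∀ r ∈ Φ, ∀ (m : R) (y : K) (n : R),
      ((ψ r m (y, n)).1 : V) = φ r y ∧
      ((ψ r m (y, n)).2 : 𝕜) = n - m * (c * inner 𝕜 r (y : V)))
    {Gt : Subgroup ((K × R) ≃ₗ[R] (K × R))}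
    (hGt : Gt = Subgroup.closure {g | ∃ r ∈ Φ, ∃ m : R, g = ψ r m}) :
    ∃ F : K × G → Gt,
      Function.Bijective F ∧
      (∀ (x y : K) (g h : G),
        F (x, g) * F (y, h) = F (x + ⟨g.1 y, hGK g.1 g.2 y y.2⟩, g * h)) ∧
      (∀ (x : K) (g : G) (y : K) (n : R),
        (((F (x, g) : (K × R) ≃ₗ[R] (K × R)) (y, n)).1 : V) = g.1 y ∧
        (((F (x, g) : (K × R) ≃ₗ[R] (K × R)) (y, n)).2 : 𝕜) =
          n - c * inner 𝕜 (x : V) (g.1 y)) := by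
  have hΦK : Φ ⊆ K := hΦ ▸ Submodule.subset_span
  have hΦG : Subgroup.closure (Set.range fun r : Φ => φ r) = G := by
    rw [hG]
    congr 1
    ext g
    simp [eq_comm]
  have hφG (r : Φ) : φ r ∈ G := hΦG ▸ Subgroup.subset_closure ⟨r, rfl⟩
  have hψ_eq (r : Φ) (m : R) : ψ r m = affineReflection (scaledInner K hR hc)
      (latticeAction hGK ⟨φ r, hφG r⟩) (Set.inclusion hΦK r) m :=
    eq_affineReflection_scaledInner hR hc hGK (hψ r r.2 m)
  have hGt_eq : Gt = Subgroup.closure {e | ∃ (r : Φ) (m : R), e = affineReflection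
      (scaledInner K hR hc) (latticeAction hGK ⟨φ r, hφG r⟩) (Set.inclusion hΦK r) m} := by
    simp only [hGt, ← hψ_eq, Subtype.exists, exists_prop]
  subst hGt_eq
  have : RingHomSurjective ((starRingEnd 𝕜).restrict R R hR) := ⟨conj_restrict_surjective hR⟩
  obtain ⟨e, he⟩ := exists_mulEquiv_closure_affineReflection (scaledInner K hR hc)
    (latticeAction hGK) (scaledInner_latticeAction hR hc hGK) (latticeAction_injective hGK hspan)
    (scaledInner_separatingLeft K hR hc0 hc) (span_range_inclusion_eq_top hΦ hΦK)
    (closure_range_codRestrict_eq_top hΦG hφG)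
  let F : K × G ≃ _ := (Multiplicative.ofAdd.prodCongr (.refl G)).trans
    (SemidirectProduct.equivProd.symm.trans e.toEquiv)
  exact ⟨F, F.bijective, fun x y g h => (map_mul e _ _).symm, fun x g y n =>
    (Prod.ext_iff.1 (he x g y n)).imp (congrArg Subtype.val) (congrArg Subtype.val)⟩

end Lattice

section Eisenstein

theorem isPrimitiveRoot_ω : IsPrimitiveRoot ω 3 :=
  Complex.isPrimitiveRoot_exp 3 three_ne_zero

theorem conj_ω : starRingEnd ℂ ω = ω ^ 2 := by
  have norm_ω : ‖ω‖ = 1 := isPrimitiveRoot_ω.norm'_eq_one three_ne_zero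
  rw [← RCLike.inv_eq_conj norm_ω]
  exact inv_eq_of_mul_eq_one_right (by rw [← pow_succ', isPrimitiveRoot_ω.pow_eq_one])

theorem conj_mem_Eis : ∀ a ∈ Eis, starRingEnd ℂ a ∈ Eis := by
  have hle : Eis ≤ Eis.comap (starRingEnd ℂ) := by
    refine Subring.closure_le.2 (Set.singleton_subset_iff.2 ?_)
    rw [SetLike.mem_coe, Subring.mem_comap, conj_ω]
    exact pow_mem (Subring.subset_closure (Set.mem_singleton ω)) 2
  exact fun a ha => hle ha

theorem p_ne_zero : p ≠ 0 := by
  rw [p, conj_ω]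
  exact sub_ne_zero.2 (isPrimitiveRoot_ω.pow_ne_one_of_pos_of_lt two_ne_zero (by norm_num)).symm

theorem inv_p_mul_mem_Eis {z : ℂ} (hz : ∃ a ∈ Eis, z = p * a) : p⁻¹ * z ∈ Eis := by
  obtain ⟨a, ha, rfl⟩ := hz
  rwa [inv_mul_cancel_left₀ p_ne_zero]

end Eisenstein

theorem affine_reflection_group_iso_semidirect
    {V : Type*} [NormedAddCommGroup V] [InnerProductSpace ℂ V] [FiniteDimensional ℂ V]
    (K : Submodule Eis V)
    (hspan : Submodule.span ℂ (K : Set V) = ⊤)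
    (hKp : ∀ x ∈ K, ∀ y ∈ K, ∃ a ∈ Eis, ⟪x, y⟫ = p * a)
    (Φ : Set V) (hΦK : Φ ⊆ (K : Set V)) (hΦ3 : ∀ r ∈ Φ, ⟪r, r⟫ = 3)
    (hΦgen : Submodule.span Eis Φ = K)
    -- the ω-reflections in the roots, as unitary automorphisms of V
    (φ : V → (V ≃ₗᵢ[ℂ] V))
    (hφ : ∀ r ∈ Φ, ∀ y : V, φ r y = y - ((1 - ω) * (⟪r, y⟫ / ⟪r, r⟫)) • r)
    -- G is the subgroup of the unitary group of V generated by the reflections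
    (G : Subgroup (V ≃ₗᵢ[ℂ] V))
    (hG : G = Subgroup.closure {g | ∃ r ∈ Φ, g = φ r})
    -- G maps K onto itself, so it acts on K by ℤ[ω]-linear isometries
    (hGK : ∀ g ∈ G, ∀ y ∈ K, g y ∈ K)
    -- the generating affine reflections ψ_{r,m} of K ⊕ ℤ[ω]
    (ψ : V → Eis → ((K × Eis) ≃ₗ[Eis] (K × Eis)))
    (hψ : ∀ r ∈ Φ, ∀ (m : Eis) (y : K) (n : Eis),
      (((ψ r m) (y, n)).1 : V) = φ r (y : V) ∧
      ((((ψ r m) (y, n)).2 : ℂ) = (n : ℂ) - (m : ℂ) * (p⁻¹ * ⟪r, (y : V)⟫)))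
    -- the affine reflection group
    (Gt : Subgroup ((K × Eis) ≃ₗ[Eis] (K × Eis)))
    (hGt : Gt = Subgroup.closure {g | ∃ r ∈ Φ, ∃ m : Eis, g = ψ r m}) :
    -- note that p⁻¹⟨r,y⟩ ∈ ℤ[ω] :
    (∀ r ∈ Φ, ∀ y ∈ K, p⁻¹ * ⟪r, y⟫ ∈ Eis) ∧
    -- the map from the semidirect product K ⋊ G onto G̃ is a group isomorphism
    ∃ F : K × G → Gt,
      Function.Bijective F ∧
      (∀ (x y : K) (g h : G),
        F (x, g) * F (y, h) =
          F (x + ⟨g.1 (y : V), hGK g.1 g.2 (y : V) y.2⟩, g * h)) ∧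
      (∀ (x : K) (g : G) (y : K) (n : Eis),
        ((((F (x, g) : (K × Eis) ≃ₗ[Eis] (K × Eis)) (y, n)).1 : V) = g.1 (y : V)) ∧
        ((((F (x, g) : (K × Eis) ≃ₗ[Eis] (K × Eis)) (y, n)).2 : ℂ) =
          (n : ℂ) - p⁻¹ * ⟪(x : V), g.1 (y : V)⟫)) := by
  have hc := fun x hx y hy => inv_p_mul_mem_Eis (hKp x hx y hy)
  exact ⟨fun r hr y hy => hc r (hΦK hr) y hy, affine_reflection_group_iso_semidirect_general
    conj_mem_Eis hspan (inv_ne_zero p_ne_zero) hc hΦgen hG hGK hψ hGt⟩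
end
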